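/- For every r in (1,∞) there is a constant C_r > 0 such that for every integer y ≥ 1 there is an integer N_{r,y} > 0 with: for every b with gcd(b,y) = 1 and every f ∈ ℓ^r(ℤ), ‖ sup_{N > N_{r,y}} |A_{N,y,b} f| ‖_{ℓ^r} ≤ C_r ‖f‖_{ℓ^r}; the constant C_r is independent of y and b. -/

import Mathlib

open scoped ENNReal

noncomputable section

/-- The prime-progression average `A_{N,y,b} f`. -/
def pavg (N y : ℕ) (b : ℤ) (f : ℤ → ℂ) (x : ℤ) : ℂ :=
  ((Nat.totient y : ℂ) / (N : ℂ)) *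
    ∑ n ∈ (Finset.range N).filter (fun n : ℕ => (n : ℤ) % (y : ℤ) = b % (y : ℤ)),
      ((ArithmeticFunction.vonMangoldt n : ℝ) : ℂ) * f (x - n)

namespace PrimeAvg

open scoped NNReal
open Finset MeasureTheory

/-- The `ℓ^p` norm of a nonnegative function on `ℤ`. -/
def nrm (p : ℝ) (g : ℤ → ℝ≥0) : ℝ≥0∞ := (∑' x, (g x : ℝ≥0∞) ^ p) ^ (1 / p)

theorem nrm_rpow {p : ℝ} (hp : 0 < p) (g : ℤ → ℝ≥0) :
    nrm p g ^ p = ∑' x, (g x : ℝ≥0∞) ^ p := by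
  rw [nrm, ← ENNReal.rpow_mul, one_div, inv_mul_cancel₀ hp.ne', ENNReal.rpow_one]

theorem nrm_mono {p : ℝ} (hp : 0 < p) {g h : ℤ → ℝ≥0} (hgh : ∀ x, g x ≤ h x) :
    nrm p g ≤ nrm p h := by
  unfold nrm
  gcongr with x
  exact hgh x

theorem nrm_le_of_tsum_le {p : ℝ} (hp : 0 < p) {A : ℝ≥0∞} {g h : ℤ → ℝ≥0}
    (H : ∑' x, (g x : ℝ≥0∞) ^ p ≤ A * ∑' x, (h x : ℝ≥0∞) ^ p) :
    nrm p g ≤ A ^ (1 / p) * nrm p h := by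
  unfold nrm
  rw [← ENNReal.mul_rpow_of_nonneg _ _ (by positivity)]
  gcongr

theorem nrm_add_le {p : ℝ} (hp : 1 ≤ p) (g h : ℤ → ℝ≥0) :
    nrm p (fun x => g x + h x) ≤ nrm p g + nrm p h := by
  have := ENNReal.lintegral_Lp_add_le (μ := Measure.count) (p := p)
    (f := fun x : ℤ => (g x : ℝ≥0∞)) (g := fun x => (h x : ℝ≥0∞))
    (measurable_of_countable _).aemeasurable (measurable_of_countable _).aemeasurable hp
  simp only [lintegral_count] at this
  simpa [nrm] using this

theorem nrm_zero {p : ℝ} (hp : 0 < p) : nrm p (fun _ => 0) = 0 := by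
  simp [nrm, hp]

theorem nrm_sum_le {ι : Type*} {p : ℝ} (hp : 1 ≤ p) (s : Finset ι) (g : ι → ℤ → ℝ≥0) :
    nrm p (fun x => ∑ i ∈ s, g i x) ≤ ∑ i ∈ s, nrm p (g i) := by
  classical
  induction s using Finset.induction_on with
  | empty => simp [nrm_zero (zero_lt_one.trans_le hp)]
  | insert i s hi ih =>
    simp only [Finset.sum_insert hi]
    exact (nrm_add_le hp _ _).trans (by gcongr)

theorem nrm_const_mul {p : ℝ} (hp : 0 < p) (c : ℝ≥0) (g : ℤ → ℝ≥0) :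
    nrm p (fun x => c * g x) = c * nrm p g := by
  unfold nrm
  simp_rw [ENNReal.coe_mul, ENNReal.mul_rpow_of_nonneg _ _ hp.le]
  rw [ENNReal.tsum_mul_left, ENNReal.mul_rpow_of_nonneg _ _ (by positivity), ← ENNReal.rpow_mul,
    mul_one_div_cancel hp.ne', ENNReal.rpow_one]

theorem nrm_comp_sub (p : ℝ) (c : ℤ) (g : ℤ → ℝ≥0) :
    nrm p (fun x => g (x - c)) = nrm p g := by
  unfold nrm
  congr 1
  exact (Equiv.subRight c).tsum_eq (fun x => (g x : ℝ≥0∞) ^ p)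

section LayerCake

theorem lintegral_rpow_truncated_below {p r a F : ℝ} (hpr : p < r) (ha : 0 < a) (hF : 0 ≤ F) :
    ∫⁻ t in Set.Ioi (0 : ℝ), ENNReal.ofReal (t ^ (-p)) *
        (if a * t < F then ENNReal.ofReal (F ^ p) else 0) * ENNReal.ofReal (t ^ (r - 1)) ≤
      ENNReal.ofReal (a ^ (p - r) / (r - p)) * ENNReal.ofReal (F ^ r) := by
  rcases hF.eq_or_lt with rfl | hF
  · have : ∀ t ∈ Set.Ioi (0 : ℝ), ENNReal.ofReal (t ^ (-p)) *
        (if a * t < 0 then ENNReal.ofReal (0 ^ p) else 0) * ENNReal.ofReal (t ^ (r - 1)) = 0 := by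
      intro t ht
      rw [if_neg (by simp only [Set.mem_Ioi] at ht; push Not; positivity)]
      simp
    rw [setLIntegral_congr_fun measurableSet_Ioi this]
    simp
  have hFa : 0 < F / a := by positivity
  have h1 : ∀ t ∈ Set.Ioi (0 : ℝ), ENNReal.ofReal (t ^ (-p)) *
        (if a * t < F then ENNReal.ofReal (F ^ p) else 0) * ENNReal.ofReal (t ^ (r - 1)) ≤
        (Set.Ioc 0 (F / a)).indicator
          (fun t => ENNReal.ofReal (F ^ p * t ^ (r - p - 1))) t := by
    intro t ht
    have ht : 0 < t := ht
    split_ifs with h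
    · have hm : t ∈ Set.Ioc 0 (F / a) := ⟨ht, by rw [le_div_iff₀ ha]; linarith⟩
      rw [Set.indicator_of_mem hm, ← ENNReal.ofReal_mul (by positivity),
        ← ENNReal.ofReal_mul (by positivity)]
      apply le_of_eq
      congr 1
      rw [show r - p - 1 = -p + (r - 1) by ring, Real.rpow_add ht]
      ring
    · simp
  refine (setLIntegral_mono' measurableSet_Ioi h1).trans ?_
  refine (setLIntegral_le_lintegral _ _).trans ?_
  rw [lintegral_indicator measurableSet_Ioc]
  have hintg : IntervalIntegrable (fun t : ℝ => t ^ (r - p - 1)) volume 0 (F / a) :=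
    intervalIntegral.intervalIntegrable_rpow' (by linarith)
  rw [← ofReal_integral_eq_lintegral_ofReal]
  · rw [← intervalIntegral.integral_of_le hFa.le, intervalIntegral.integral_const_mul,
      integral_rpow (Or.inl (by linarith)), ← ENNReal.ofReal_mul (by
        have : 0 < r - p := by linarith
        positivity)]
    apply le_of_eq
    congr 1
    have e : r - p - 1 + 1 = r - p := by ring
    rw [e, Real.zero_rpow (by linarith), sub_zero, Real.div_rpow hF.le ha.le,
      show p - r = -(r - p) by ring, Real.rpow_neg ha.le]
    have : F ^ r = F ^ p * F ^ (r - p) := by rw [← Real.rpow_add hF]; congr 1; ring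
    rw [this]
    field_simp
  · exact ((intervalIntegrable_iff_integrableOn_Ioc_of_le hFa.le).1 hintg).const_mul _
  · filter_upwards [ae_restrict_mem measurableSet_Ioc] with t ht
    have := ht.1
    positivity

theorem lintegral_rpow_truncated_above {p r a F : ℝ} (hpr : r < p) (hp : 0 < p) (ha : 0 < a)
    (hF : 0 ≤ F) :
    ∫⁻ t in Set.Ioi (0 : ℝ), ENNReal.ofReal (t ^ (-p)) *
        (if F ≤ a * t then ENNReal.ofReal (F ^ p) else 0) * ENNReal.ofReal (t ^ (r - 1)) ≤
      ENNReal.ofReal (a ^ (p - r) / (p - r)) * ENNReal.ofReal (F ^ r) := by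
  rcases hF.eq_or_lt with rfl | hF
  · simp [Real.zero_rpow hp.ne']
  have hFa : 0 < F / a := by positivity
  have h1 : ∀ t ∈ Set.Ioi (0 : ℝ), ENNReal.ofReal (t ^ (-p)) *
        (if F ≤ a * t then ENNReal.ofReal (F ^ p) else 0) * ENNReal.ofReal (t ^ (r - 1)) ≤
        (Set.Ici (F / a)).indicator
          (fun t => ENNReal.ofReal (F ^ p * t ^ (r - p - 1))) t := by
    intro t ht
    have ht : 0 < t := ht
    split_ifs with h
    · have hm : t ∈ Set.Ici (F / a) := by
        rw [Set.mem_Ici, div_le_iff₀ ha]; linarith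
      rw [Set.indicator_of_mem hm, ← ENNReal.ofReal_mul (by positivity),
        ← ENNReal.ofReal_mul (by positivity)]
      apply le_of_eq
      congr 1
      rw [show r - p - 1 = -p + (r - 1) by ring, Real.rpow_add ht]
      ring
    · simp
  refine (setLIntegral_mono' measurableSet_Ioi h1).trans ?_
  refine (setLIntegral_le_lintegral _ _).trans ?_
  rw [lintegral_indicator measurableSet_Ici, setLIntegral_congr Ioi_ae_eq_Ici.symm]
  have hintg : IntegrableOn (fun t : ℝ => t ^ (r - p - 1)) (Set.Ioi (F / a)) :=
    integrableOn_Ioi_rpow_of_lt (by linarith) hFa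
  rw [← ofReal_integral_eq_lintegral_ofReal]
  · rw [integral_const_mul,
      integral_Ioi_rpow_of_lt (by linarith) hFa, ← ENNReal.ofReal_mul (by
        have : 0 < p - r := by linarith
        positivity)]
    apply le_of_eq
    congr 1
    have e : r - p - 1 + 1 = r - p := by ring
    rw [e, Real.div_rpow hF.le ha.le,
      show p - r = -(r - p) by ring, Real.rpow_neg ha.le]
    have : F ^ r = F ^ p * F ^ (r - p) := by rw [← Real.rpow_add hF]; congr 1; ring
    rw [this]
    have : r - p ≠ 0 := by linarith
    have h3 : a ^ (r - p) ≠ 0 := by positivity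
    field_simp
  · exact hintg.const_mul _
  · filter_upwards [ae_restrict_mem measurableSet_Ioi] with t ht
    have : 0 < t := hFa.trans ht
    positivity

/-- Marcinkiewicz-type estimate: a distributional bound splitting `f` at a height proportional to
the level yields a strong-type bound. -/
theorem tsum_rpow_le_of_distribution {p₀ p₁ r a : ℝ} (hr : 0 < r) (h0 : p₀ < r) (h1 : r < p₁)
    (ha : 0 < a) (A B : ℝ≥0∞) (f g : ℤ → ℝ≥0)
    (H : ∀ t : ℝ, 0 < t → (Measure.count {x : ℤ | t < g x} : ℝ≥0∞) ≤
      A * ∑' x, (ENNReal.ofReal (t ^ (-p₀)) *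
          if a * t < f x then ENNReal.ofReal ((f x : ℝ) ^ p₀) else 0) +
      B * ∑' x, (ENNReal.ofReal (t ^ (-p₁)) *
          if f x ≤ a * t then ENNReal.ofReal ((f x : ℝ) ^ p₁) else 0)) :
    ∑' x, (g x : ℝ≥0∞) ^ r ≤
      (ENNReal.ofReal r * (A * ENNReal.ofReal (a ^ (p₀ - r) / (r - p₀)) +
        B * ENNReal.ofReal (a ^ (p₁ - r) / (p₁ - r)))) * ∑' x, (f x : ℝ≥0∞) ^ r := by
  have coe_rpow : ∀ (u : ℤ → ℝ≥0) x, (u x : ℝ≥0∞) ^ r = ENNReal.ofReal ((u x : ℝ) ^ r) := by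
    intro u x
    rw [← ENNReal.ofReal_rpow_of_nonneg (by positivity) hr.le, ENNReal.ofReal_coe_nnreal]
  have key := lintegral_rpow_eq_lintegral_meas_lt_mul (Measure.count : Measure ℤ)
    (f := fun x => (g x : ℝ)) (ae_of_all _ fun x => by positivity)
    (measurable_of_countable _).aemeasurable hr
  rw [lintegral_count] at key
  simp_rw [coe_rpow g, key, mul_assoc]
  gcongr
  have meas0 : ∀ x, Measurable fun t : ℝ => ENNReal.ofReal (t ^ (-p₀)) *
      (if a * t < f x then ENNReal.ofReal ((f x : ℝ) ^ p₀) else 0) *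
        ENNReal.ofReal (t ^ (r - 1)) := by
    intro x
    refine ((by fun_prop : Measurable _).mul (Measurable.ite ?_ ?_ ?_)).mul (by fun_prop)
    · exact measurableSet_lt (by fun_prop) (by fun_prop)
    all_goals fun_prop
  have meas1 : ∀ x, Measurable fun t : ℝ => ENNReal.ofReal (t ^ (-p₁)) *
      (if f x ≤ a * t then ENNReal.ofReal ((f x : ℝ) ^ p₁) else 0) *
        ENNReal.ofReal (t ^ (r - 1)) := by
    intro x
    refine ((by fun_prop : Measurable _).mul (Measurable.ite ?_ ?_ ?_)).mul (by fun_prop)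
    · exact measurableSet_le (by fun_prop) (by fun_prop)
    all_goals fun_prop
  calc ∫⁻ t in Set.Ioi (0 : ℝ), Measure.count {x : ℤ | t < g x} * ENNReal.ofReal (t ^ (r - 1))
      ≤ ∫⁻ t in Set.Ioi (0 : ℝ), (A * (∑' x, (ENNReal.ofReal (t ^ (-p₀)) *
          (if a * t < f x then ENNReal.ofReal ((f x : ℝ) ^ p₀) else 0) *
          ENNReal.ofReal (t ^ (r - 1)))) +
        B * (∑' x, (ENNReal.ofReal (t ^ (-p₁)) *
          (if f x ≤ a * t then ENNReal.ofReal ((f x : ℝ) ^ p₁) else 0) *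
          ENNReal.ofReal (t ^ (r - 1))))) := by
        refine setLIntegral_mono' measurableSet_Ioi fun t ht => ?_
        simp_rw [ENNReal.tsum_mul_right]
        rw [← mul_assoc, ← mul_assoc, ← add_mul]
        gcongr
        exact H t ht
    _ = A * (∑' x, ∫⁻ t in Set.Ioi (0 : ℝ), (ENNReal.ofReal (t ^ (-p₀)) *
          (if a * t < f x then ENNReal.ofReal ((f x : ℝ) ^ p₀) else 0) *
          ENNReal.ofReal (t ^ (r - 1)))) +
        B * (∑' x, ∫⁻ t in Set.Ioi (0 : ℝ), (ENNReal.ofReal (t ^ (-p₁)) *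
          (if f x ≤ a * t then ENNReal.ofReal ((f x : ℝ) ^ p₁) else 0) *
          ENNReal.ofReal (t ^ (r - 1)))) := by
        rw [lintegral_add_left, lintegral_const_mul, lintegral_const_mul, lintegral_tsum,
          lintegral_tsum]
        · exact fun x => (meas1 x).aemeasurable
        · exact fun x => (meas0 x).aemeasurable
        · exact Measurable.tsum meas1
        · exact Measurable.tsum meas0
        · exact (Measurable.tsum meas0).const_mul _
    _ ≤ A * (∑' x, ENNReal.ofReal (a ^ (p₀ - r) / (r - p₀)) * ENNReal.ofReal ((f x : ℝ) ^ r)) +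
        B * (∑' x, ENNReal.ofReal (a ^ (p₁ - r) / (p₁ - r)) * ENNReal.ofReal ((f x : ℝ) ^ r)) := by
        gcongr with x x
        · exact lintegral_rpow_truncated_below h0 ha (by positivity)
        · exact lintegral_rpow_truncated_above h1 (hr.trans h1) ha (by positivity)
    _ = _ := by
        rw [ENNReal.tsum_mul_left, ENNReal.tsum_mul_left]
        simp_rw [coe_rpow f]
        ring

end LayerCake

/-- The truncated one-sided Hardy–Littlewood maximal function along the step `d`. -/
def hl (L : ℕ) (d : ℤ) (f : ℤ → ℝ≥0) (x : ℤ) : ℝ≥0 :=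
  (range (L + 1)).sup fun n => (∑ i ∈ range n, f (x - d * i)) / n

/-- The maximal ergodic theorem for the shift by `d` on `ℤ`. -/
theorem sum_maximal_nonneg (L : ℕ) (d : ℤ) (g : ℤ → ℝ) (E : Finset ℤ)
    (hE : ∀ x, (∃ n ∈ range (L + 1), 0 < ∑ i ∈ range n, g (x - d * i)) ↔ x ∈ E) :
    0 ≤ ∑ x ∈ E, g x := by
  classical
  have hne : (range (L + 1)).Nonempty := by simp
  let M : ℤ → ℝ := fun x => (range (L + 1)).sup' hne fun n => ∑ i ∈ range n, g (x - d * i)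
  have hM0 : ∀ x, 0 ≤ M x := fun x =>
    (le_of_eq (by simp)).trans
      (Finset.le_sup' (fun n => ∑ i ∈ range n, g (x - d * i)) (mem_range.2 (Nat.succ_pos L)))
  have hMpos : ∀ x, 0 < M x ↔ x ∈ E := fun x => by
    rw [← hE x, Finset.lt_sup'_iff]
  have hstep : ∀ x ∈ E, M x - M (x - d) ≤ g x := by
    intro x hx
    obtain ⟨n, hn, hMn⟩ := Finset.exists_mem_eq_sup' hne fun n => ∑ i ∈ range n, g (x - d * i)
    have hMn : M x = _ := hMn
    have hpos := (hMpos x).2 hx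
    rcases n with _ | n
    · simp at hMn; linarith
    rw [Finset.sum_range_succ'] at hMn
    have h2 : ∑ i ∈ range n, g (x - d - d * i) ≤ M (x - d) :=
      Finset.le_sup' (fun n => ∑ i ∈ range n, g (x - d - d * i))
        (mem_range.2 (by have := mem_range.1 hn; omega))
    have h3 : ∑ i ∈ range n, g (x - d * ((i + 1 : ℕ) : ℤ)) = ∑ i ∈ range n, g (x - d - d * i) :=
      Finset.sum_congr rfl fun i _ => by congr 1; push_cast; ring
    rw [h3] at hMn
    simp at hMn
    linarith
  have h4 : ∑ x ∈ E, M (x - d) ≤ ∑ x ∈ E, M x := by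
    rw [← Finset.sum_image (f := M) (g := fun x : ℤ => x - d) (s := E)
      (fun a _ b _ h => by simpa using h)]
    rw [← Finset.sum_filter_ne_zero]
    refine Finset.sum_le_sum_of_subset_of_nonneg ?_ fun x _ _ => hM0 x
    intro x hx
    rw [mem_filter] at hx
    exact (hMpos x).1 (lt_of_le_of_ne (hM0 x) hx.2.symm)
  calc (0 : ℝ) ≤ ∑ x ∈ E, (M x - M (x - d)) := by rw [Finset.sum_sub_distrib]; linarith
    _ ≤ _ := Finset.sum_le_sum hstep

theorem count_lt_hl_le (L : ℕ) (d : ℤ) (f : ℤ → ℝ≥0) (hf : f.support.Finite) {t : ℝ}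
    (ht : 0 < t) :
    (Measure.count {x : ℤ | t < hl L d f x} : ℝ≥0∞) ≤
      ENNReal.ofReal t⁻¹ * ∑' x, (f x : ℝ≥0∞) := by
  classical
  set E₀ : Finset ℤ := (range L).biUnion fun i => hf.toFinset.image fun x => x + d * i with hE₀
  have key : ∀ x, (t < hl L d f x) ↔
      ∃ n ∈ range (L + 1), 0 < ∑ i ∈ range n, ((f (x - d * i) : ℝ) - t) := by
    intro x
    have h0 : t < hl L d f x ↔ Real.toNNReal t < hl L d f x :=
      (Real.toNNReal_lt_iff_lt_coe ht.le).symm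
    rw [h0, hl, Finset.lt_sup_iff]
    refine exists_congr fun n => and_congr_right fun _ => ?_
    rw [Real.toNNReal_lt_iff_lt_coe ht.le]
    rcases Nat.eq_zero_or_pos n with rfl | hn
    · simp [ht.le]
    · have : (0 : ℝ) < n := by exact_mod_cast hn
      push_cast
      rw [lt_div_iff₀ this, Finset.sum_sub_distrib]
      simp [mul_comm]
  have hsub : ∀ x, t < hl L d f x → x ∈ E₀ := by
    intro x hx
    obtain ⟨n, hn, hpos⟩ := (key x).1 hx
    by_contra hcon
    refine absurd hpos (not_lt.2 (Finset.sum_nonpos fun i hi => ?_))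
    have : f (x - d * i) = 0 := by
      by_contra h
      refine hcon ?_
      rw [hE₀, mem_biUnion]
      refine ⟨i, ?_, ?_⟩
      · simp only [mem_range] at hi hn ⊢; omega
      · rw [mem_image]
        exact ⟨x - d * i, by simpa using h, by ring⟩
    rw [this]; simpa using ht.le
  set E := E₀.filter fun x => t < hl L d f x with hE
  have hEmem : ∀ x, t < hl L d f x ↔ x ∈ E := fun x => by
    rw [hE, mem_filter]; exact ⟨fun h => ⟨hsub x h, h⟩, fun h => h.2⟩
  have hg := sum_maximal_nonneg L d (fun x => (f x : ℝ) - t) E fun x => by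
    rw [← hEmem, key]
  have hset : {x : ℤ | t < hl L d f x} = (E : Set ℤ) := by
    ext x; simp [hEmem]
  rw [hset, Measure.count_apply_finset]
  have h1 : (E.card : ℝ) ≤ t⁻¹ * ∑ x ∈ E, (f x : ℝ) := by
    rw [Finset.sum_sub_distrib] at hg
    simp at hg
    rw [inv_mul_eq_div, le_div_iff₀ ht]
    exact hg
  calc (E.card : ℝ≥0∞) = ENNReal.ofReal (E.card : ℝ) := by simp
    _ ≤ ENNReal.ofReal (t⁻¹ * ∑ x ∈ E, (f x : ℝ)) := ENNReal.ofReal_le_ofReal h1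
    _ = ENNReal.ofReal t⁻¹ * ∑ x ∈ E, (f x : ℝ≥0∞) := by
        rw [ENNReal.ofReal_mul (by positivity), ENNReal.ofReal_sum_of_nonneg (by simp)]
        simp
    _ ≤ _ := by gcongr; exact ENNReal.sum_le_tsum E

theorem hl_le_truncate_add (L : ℕ) (d : ℤ) (f : ℤ → ℝ≥0) (c : ℝ≥0) (x : ℤ) :
    hl L d f x ≤ hl L d (fun y => if c < f y then f y else 0) x + c := by
  refine Finset.sup_le fun n hn => ?_
  calc (∑ i ∈ range n, f (x - d * i)) / n
      ≤ (∑ i ∈ range n, ((if c < f (x - d * i) then f (x - d * i) else 0) + c)) / n := by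
        gcongr with i
        split_ifs with h
        · exact le_self_add
        · simpa using h
    _ ≤ (∑ i ∈ range n, (if c < f (x - d * i) then f (x - d * i) else 0)) / n + c := by
        rw [Finset.sum_add_distrib, add_div]
        gcongr
        rcases Nat.eq_zero_or_pos n with rfl | h
        · simp
        · have : (n : ℝ≥0) ≠ 0 := by positivity
          simp [this]
    _ ≤ _ := by
        gcongr
        exact Finset.le_sup
          (f := fun n : ℕ =>
            (∑ i ∈ range n, (if c < f (x - d * i) then f (x - d * i) else 0)) / n) hn

/-- The Hardy–Littlewood maximal inequality along arithmetic progressions. -/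
theorem exists_nrm_hl_le {p : ℝ} (hp : 1 < p) :
    ∃ C : ℝ≥0, ∀ (L : ℕ) (d : ℤ) (f : ℤ → ℝ≥0), f.support.Finite →
      nrm p (hl L d f) ≤ C * nrm p f := by
  have hp0 : 0 < p := by linarith
  set A : ℝ≥0∞ := ENNReal.ofReal p * (2 * ENNReal.ofReal ((1 / 2) ^ (1 - p) / (p - 1)) +
        0 * ENNReal.ofReal ((1 / 2) ^ (p + 1 - p) / (p + 1 - p))) with hA
  have hAtop : A ≠ ∞ := by
    rw [hA, zero_mul, add_zero]
    exact ENNReal.mul_ne_top ENNReal.ofReal_ne_top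
      (ENNReal.mul_ne_top (by simp) ENNReal.ofReal_ne_top)
  refine ⟨(A ^ (1 / p)).toNNReal, fun L d f hf => ?_⟩
  rw [ENNReal.coe_toNNReal (ENNReal.rpow_ne_top_of_nonneg (by positivity) hAtop)]
  refine nrm_le_of_tsum_le hp0 (tsum_rpow_le_of_distribution hp0 hp (by linarith) (by norm_num)
    2 0 f _ fun t ht => ?_)
  rw [zero_mul, add_zero]
  set c : ℝ≥0 := Real.toNNReal (t / 2) with hc
  have hct : (c : ℝ) = t / 2 := Real.coe_toNNReal _ (by positivity)
  set f₁ : ℤ → ℝ≥0 := fun y => if c < f y then f y else 0 with hf₁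
  have hsupp : f₁.support.Finite := hf.subset fun x hx => by
    simp only [hf₁, Function.mem_support] at hx ⊢
    intro h; simp [h] at hx
  calc (Measure.count {x : ℤ | t < hl L d f x} : ℝ≥0∞)
      ≤ Measure.count {x : ℤ | t / 2 < hl L d f₁ x} := by
        refine measure_mono fun x hx => ?_
        have h := hl_le_truncate_add L d f c x
        have h' : (hl L d f x : ℝ) ≤ hl L d f₁ x + c := by exact_mod_cast h
        simp only [Set.mem_ofPred_eq] at hx ⊢
        linarith
    _ ≤ ENNReal.ofReal (t / 2)⁻¹ * ∑' x, (f₁ x : ℝ≥0∞) :=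
        count_lt_hl_le L d f₁ hsupp (by positivity)
    _ = _ := by
        rw [inv_div, div_eq_mul_inv, ENNReal.ofReal_mul (by norm_num), mul_assoc,
          ← ENNReal.tsum_mul_left, Real.rpow_neg_one]
        simp only [ENNReal.ofReal_ofNat]
        congr 2
        ext x
        congr 1
        simp only [hf₁, Real.rpow_one, ENNReal.ofReal_coe_nnreal]
        have : c < f x ↔ 1 / 2 * t < f x := by
          rw [← NNReal.coe_lt_coe, hct]; ring_nf
        simp only [← this]
        split_ifs <;> simp

theorem count_lt_le_nrm {p t : ℝ} (hp : 0 < p) (ht : 0 < t) (g : ℤ → ℝ≥0) :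
    (Measure.count {x : ℤ | t < g x} : ℝ≥0∞) ≤ ENNReal.ofReal (t ^ (-p)) * nrm p g ^ p := by
  have h := mul_meas_ge_le_lintegral₀ (μ := (Measure.count : Measure ℤ))
    (f := fun x => (g x : ℝ≥0∞) ^ p) (measurable_of_countable _).aemeasurable
    (ENNReal.ofReal (t ^ p))
  rw [lintegral_count, ← nrm_rpow hp] at h
  have hsub : {x : ℤ | t < g x} ⊆ {x | ENNReal.ofReal (t ^ p) ≤ (g x : ℝ≥0∞) ^ p} := by
    intro x hx
    simp only [Set.mem_ofPred_eq] at hx ⊢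
    rw [← ENNReal.ofReal_rpow_of_nonneg ht.le hp.le, ← ENNReal.ofReal_coe_nnreal]
    gcongr
  calc (Measure.count {x : ℤ | t < g x} : ℝ≥0∞)
      ≤ ENNReal.ofReal (t ^ (-p)) * (ENNReal.ofReal (t ^ p) *
          Measure.count {x : ℤ | t < g x}) := by
        rw [← mul_assoc, ← ENNReal.ofReal_mul (by positivity), ← Real.rpow_add ht]
        simp
    _ ≤ _ := by
        gcongr
        exact (by gcongr : ENNReal.ofReal (t ^ p) * Measure.count {x : ℤ | t < g x} ≤ _).trans h

/-- `T` is bounded on finitely supported functions in `ℓ^p` with constant `A`. -/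
def StrongType (T : (ℤ → ℝ≥0) → ℤ → ℝ≥0) (p : ℝ) (A : ℝ≥0∞) : Prop :=
  ∀ f : ℤ → ℝ≥0, f.support.Finite → nrm p (T f) ≤ A * nrm p f

/-- Real interpolation between strong-type bounds, with a free splitting parameter `a`. -/
theorem StrongType.interpolate {T : (ℤ → ℝ≥0) → ℤ → ℝ≥0} {p₀ p₁ r a : ℝ} {A₀ A₁ : ℝ≥0∞}
    (hT : ∀ f₁ f₂ x, T (f₁ + f₂) x ≤ T f₁ x + T f₂ x)
    (h0 : StrongType T p₀ A₀) (h1 : StrongType T p₁ A₁)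
    (hp₀ : 0 < p₀) (hr₀ : p₀ < r) (hr₁ : r < p₁) (ha : 0 < a) :
    StrongType T r ((ENNReal.ofReal r * ((2 * A₀) ^ p₀ * ENNReal.ofReal (a ^ (p₀ - r) / (r - p₀)) +
        (2 * A₁) ^ p₁ * ENNReal.ofReal (a ^ (p₁ - r) / (p₁ - r)))) ^ (1 / r)) := by
  intro f hf
  have hr : 0 < r := hp₀.trans hr₀
  have hp₁ : 0 < p₁ := hr.trans hr₁
  refine nrm_le_of_tsum_le hr (tsum_rpow_le_of_distribution hr hr₀ hr₁ ha _ _ f _ fun t ht => ?_)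
  set f₁ : ℤ → ℝ≥0 := fun y => if a * t < f y then f y else 0 with hf₁
  set f₂ : ℤ → ℝ≥0 := fun y => if f y ≤ a * t then f y else 0 with hf₂
  have hsum : f = f₁ + f₂ := by
    ext x
    simp only [hf₁, hf₂, Pi.add_apply]
    rcases lt_or_ge (a * t) (f x) with h | h
    · simp [h, h.not_ge]
    · simp [h, h.not_gt]
  have hs₁ : f₁.support.Finite := hf.subset fun x hx => by
    simp only [hf₁, Function.mem_support] at hx ⊢
    intro h; simp [h] at hx
  have hs₂ : f₂.support.Finite := hf.subset fun x hx => by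
    simp only [hf₂, Function.mem_support] at hx ⊢
    intro h; simp [h] at hx
  have main : ∀ (p : ℝ) (A : ℝ≥0∞) (u : ℤ → ℝ≥0), 0 < p → StrongType T p A → u.support.Finite →
      (Measure.count {x : ℤ | t / 2 < T u x} : ℝ≥0∞) ≤
        (2 * A) ^ p * (ENNReal.ofReal (t ^ (-p)) * ∑' x, (u x : ℝ≥0∞) ^ p) := by
    intro p A u hp hst hu
    refine (count_lt_le_nrm hp (by positivity) _).trans ?_
    calc ENNReal.ofReal ((t / 2) ^ (-p)) * nrm p (T u) ^ p
        ≤ ENNReal.ofReal ((t / 2) ^ (-p)) * (A * nrm p u) ^ p := by gcongr; exact hst u hu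
      _ = _ := by
        rw [ENNReal.mul_rpow_of_nonneg _ _ hp.le, ENNReal.mul_rpow_of_nonneg _ _ hp.le,
          nrm_rpow hp, Real.div_rpow ht.le (by norm_num), div_eq_mul_inv,
          ENNReal.ofReal_mul (by positivity), Real.rpow_neg (by norm_num : (0 : ℝ) ≤ 2), inv_inv,
          ← ENNReal.ofReal_rpow_of_nonneg (by norm_num) hp.le, ENNReal.ofReal_ofNat]
        ring
  calc (Measure.count {x : ℤ | t < T f x} : ℝ≥0∞)
      ≤ Measure.count ({x : ℤ | t / 2 < T f₁ x} ∪ {x : ℤ | t / 2 < T f₂ x}) := by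
        refine measure_mono fun x hx => ?_
        have h := hT f₁ f₂ x
        rw [← hsum] at h
        have h' : (T f x : ℝ) ≤ T f₁ x + T f₂ x := by exact_mod_cast h
        simp only [Set.mem_ofPred_eq, Set.mem_union] at hx ⊢
        by_contra! hcon
        linarith
    _ ≤ _ := (measure_union_le _ _)
    _ ≤ _ := add_le_add (main p₀ A₀ f₁ hp₀ h0 hs₁) (main p₁ A₁ f₂ hp₁ h1 hs₂)
    _ = _ := by
        rw [← ENNReal.tsum_mul_left, ← ENNReal.tsum_mul_left (a := ENNReal.ofReal (t ^ (-p₁)))]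
        congr 3
        · ext x
          congr 1
          simp only [hf₁]
          split_ifs
          · rw [← ENNReal.ofReal_rpow_of_nonneg (by positivity) hp₀.le, ENNReal.ofReal_coe_nnreal]
          · simp [hp₀]
        · ext x
          congr 1
          simp only [hf₂]
          split_ifs
          · rw [← ENNReal.ofReal_rpow_of_nonneg (by positivity) hp₁.le, ENNReal.ofReal_coe_nnreal]
          · simp [hp₁]

/-- Interpolation with geometric bookkeeping: endpoint bounds of sizes `2^(e₀ s)` and `2^(e₁ s)`
give geometric decay at any intermediate exponent on the correct side of the balance. -/
theorem exists_geometric_interpolation {p₀ p₁ r C₀ C₁ e₀ e₁ η : ℝ} (hp₀ : 0 < p₀) (hr₀ : p₀ < r)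
    (hr₁ : r < p₁) (hC₀ : 0 ≤ C₀) (hC₁ : 0 ≤ C₁) (he₀ : e₀ * p₀ + η * (p₀ - r) < 0)
    (he₁ : e₁ * p₁ + η * (p₁ - r) < 0) :
    ∃ C c : ℝ, 0 ≤ C ∧ 0 < c ∧ ∀ (s : ℕ) (T : (ℤ → ℝ≥0) → ℤ → ℝ≥0),
      (∀ f₁ f₂ x, T (f₁ + f₂) x ≤ T f₁ x + T f₂ x) →
      StrongType T p₀ (ENNReal.ofReal (C₀ * 2 ^ (e₀ * s))) →
      StrongType T p₁ (ENNReal.ofReal (C₁ * 2 ^ (e₁ * s))) →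
      StrongType T r (ENNReal.ofReal (C * 2 ^ (-c * s))) := by
  have hr : 0 < r := hp₀.trans hr₀
  have hp₁ : 0 < p₁ := hr.trans hr₁
  have d0 : 0 < r - p₀ := by linarith
  have d1 : 0 < p₁ - r := by linarith
  set K : ℝ := r * ((2 * C₀) ^ p₀ / (r - p₀) + (2 * C₁) ^ p₁ / (p₁ - r)) with hK
  set m : ℝ := max (e₀ * p₀ + η * (p₀ - r)) (e₁ * p₁ + η * (p₁ - r)) with hm
  have hK0 : 0 ≤ K := by positivity
  have hm0 : m < 0 := max_lt he₀ he₁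
  refine ⟨K ^ (1 / r), -m / r, by positivity, by have : 0 < -m := by linarith
                                                 positivity, ?_⟩
  intro s T hT h0 h1 f hf
  have h := StrongType.interpolate hT h0 h1 hp₀ hr₀ hr₁ (a := 2 ^ (η * s)) (by positivity) f hf
  refine h.trans ?_
  gcongr
  have term : ∀ (C e p : ℝ) (D : ℝ), 0 ≤ C → 0 < p → 0 < D → e * p + η * (p - r) ≤ m →
      (2 * ENNReal.ofReal (C * 2 ^ (e * s))) ^ p *
        ENNReal.ofReal (((2 : ℝ) ^ (η * s)) ^ (p - r) / D)
        ≤ ENNReal.ofReal ((2 * C) ^ p / D * 2 ^ (m * s)) := by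
    intro C e p D hC hp hD hle
    rw [← ENNReal.ofReal_ofNat, ← ENNReal.ofReal_mul (by norm_num),
      ENNReal.ofReal_rpow_of_nonneg (by positivity) hp.le, ← ENNReal.ofReal_mul (by positivity)]
    apply ENNReal.ofReal_le_ofReal
    have : (2 * (C * 2 ^ (e * s))) ^ p * (((2 : ℝ) ^ (η * s)) ^ (p - r) / D) =
        (2 * C) ^ p / D * 2 ^ ((e * p + η * (p - r)) * s) := by
      rw [← mul_assoc 2 C, Real.mul_rpow (by positivity) (by positivity),
        ← Real.rpow_mul (by norm_num),
        ← Real.rpow_mul (by norm_num)]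
      rw [show (e * p + η * (p - r)) * s = e * s * p + η * s * (p - r) by ring,
        Real.rpow_add (by norm_num)]
      ring
    rw [this]
    gcongr
    norm_num
  calc (ENNReal.ofReal r * ((2 * ENNReal.ofReal (C₀ * 2 ^ (e₀ * s))) ^ p₀ *
          ENNReal.ofReal (((2 : ℝ) ^ (η * s)) ^ (p₀ - r) / (r - p₀)) +
        (2 * ENNReal.ofReal (C₁ * 2 ^ (e₁ * s))) ^ p₁ *
          ENNReal.ofReal (((2 : ℝ) ^ (η * s)) ^ (p₁ - r) / (p₁ - r)))) ^ (1 / r)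
      ≤ (ENNReal.ofReal r * (ENNReal.ofReal ((2 * C₀) ^ p₀ / (r - p₀) * 2 ^ (m * s)) +
        ENNReal.ofReal ((2 * C₁) ^ p₁ / (p₁ - r) * 2 ^ (m * s)))) ^ (1 / r) := by
        gcongr
        · exact term C₀ e₀ p₀ _ hC₀ hp₀ d0 (le_max_left _ _)
        · exact term C₁ e₁ p₁ _ hC₁ hp₁ d1 (le_max_right _ _)
    _ = ENNReal.ofReal (K * 2 ^ (m * s)) ^ (1 / r) := by
        rw [← ENNReal.ofReal_add (by positivity) (by positivity), ← ENNReal.ofReal_mul hr.le]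
        congr 2
        rw [hK]; ring
    _ = _ := by
        rw [ENNReal.ofReal_rpow_of_nonneg (by positivity) (by positivity),
          Real.mul_rpow hK0 (by positivity), ← Real.rpow_mul (by norm_num)]
        congr 3
        field_simp

open scoped ArithmeticFunction.Moebius ArithmeticFunction.zeta

/-- The arithmetic function sending `d` to `d` if `d ∣ n` and to `0` otherwise. -/
def dvdWeight (n : ℤ) : ArithmeticFunction ℝ :=
  ⟨fun d => if (d : ℤ) ∣ n then (d : ℝ) else 0, by simp⟩

theorem dvdWeight_apply (n : ℤ) (d : ℕ) :
    dvdWeight n d = if (d : ℤ) ∣ n then (d : ℝ) else 0 := rfl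

theorem dvdWeight_nonneg (n : ℤ) (d : ℕ) : 0 ≤ dvdWeight n d := by
  rw [dvdWeight_apply]; split_ifs <;> positivity

theorem isMultiplicative_dvdWeight (n : ℤ) : (dvdWeight n).IsMultiplicative := by
  refine ⟨by simp [dvdWeight_apply], fun {a b} hab => ?_⟩
  have : ((a * b : ℕ) : ℤ) ∣ n ↔ (a : ℤ) ∣ n ∧ (b : ℤ) ∣ n := by
    push_cast
    exact ⟨fun h => ⟨(dvd_mul_right _ _).trans h, (dvd_mul_left _ _).trans h⟩,
      fun h => (Nat.isCoprime_iff_coprime.2 hab).mul_dvd h.1 h.2⟩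
  simp only [dvdWeight_apply, this]
  by_cases h1 : (a : ℤ) ∣ n <;> by_cases h2 : (b : ℤ) ∣ n <;> simp [h1, h2]

/-- The Ramanujan sum `c_q(n)`, as an arithmetic function of `q`. -/
def ram (n : ℤ) : ArithmeticFunction ℝ := (μ : ArithmeticFunction ℝ) * dvdWeight n

theorem ram_apply (n : ℤ) (q : ℕ) :
    ram n q = ∑ x ∈ q.divisorsAntidiagonal, (μ x.1 : ℝ) * dvdWeight n x.2 := by
  simp [ram, ArithmeticFunction.mul_apply]

theorem isMultiplicative_ram (n : ℤ) : (ram n).IsMultiplicative :=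
  ArithmeticFunction.isMultiplicative_moebius.intCast.mul (isMultiplicative_dvdWeight n)

theorem sum_divisors_ram (n : ℤ) {q : ℕ} (hq : 0 < q) :
    ∑ d ∈ q.divisors, ram n d = dvdWeight n q :=
  (ArithmeticFunction.sum_eq_iff_sum_mul_moebius_eq (f := ram n) (g := dvdWeight n)).2
    (fun m _ => (ram_apply n m).symm) q hq

theorem ram_prime (n : ℤ) {p : ℕ} (hp : p.Prime) :
    ram n p = (if (p : ℤ) ∣ n then (p : ℝ) else 0) - 1 := by
  have h := sum_divisors_ram n hp.pos
  rw [hp.sum_divisors, (isMultiplicative_ram n).map_one, dvdWeight_apply] at h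
  linarith

theorem ram_prod_primes (n : ℤ) (S : Finset ℕ) (hS : ∀ p ∈ S, p.Prime) :
    ram n (∏ p ∈ S, p) = ∏ p ∈ S, ram n p :=
  (isMultiplicative_ram n).map_prod_of_prime S hS

theorem abs_ram_le (n : ℤ) (q : ℕ) : |ram n q| ≤ ∑ d ∈ q.divisors, dvdWeight n d := by
  rw [ram_apply]
  refine (Finset.abs_sum_le_sum_abs _ _).trans ?_
  rw [← Nat.sum_divisorsAntidiagonal' (f := fun _ d => dvdWeight n d)]
  refine Finset.sum_le_sum fun x _ => ?_
  rw [abs_mul, abs_of_nonneg (dvdWeight_nonneg _ _)]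
  have : |(μ x.1 : ℝ)| ≤ 1 := by exact_mod_cast ArithmeticFunction.abs_moebius_le_one (n := x.1)
  exact mul_le_of_le_one_left (dvdWeight_nonneg _ _) this

/-- Orthogonality of Ramanujan sums, in divisor form. -/
theorem sum_moebius_gcd (h : ℤ) {q q' : ℕ} (hq : 0 < q) (hq' : 0 < q') :
    ∑ x ∈ q.divisorsAntidiagonal, ∑ x' ∈ q'.divisorsAntidiagonal,
      (μ x.1 : ℝ) * μ x'.1 * dvdWeight h (x.2.gcd x'.2) = if q = q' then ram h q else 0 := by
  have step1 : ∀ d' : ℕ, 0 < d' → ∑ x ∈ q.divisorsAntidiagonal,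
      (μ x.1 : ℝ) * dvdWeight h (x.2.gcd d') = if q ∣ d' then ram h q else 0 := by
    intro d' hd'
    refine (ArithmeticFunction.sum_eq_iff_sum_mul_moebius_eq
      (f := fun e => if e ∣ d' then ram h e else 0)
      (g := fun d => dvdWeight h (d.gcd d'))).1 (fun d hd => ?_) q hq
    rw [← sum_divisors_ram h (Nat.gcd_pos_of_pos_left d' hd), ← Finset.sum_filter]
    refine Finset.sum_congr ?_ fun _ _ => rfl
    ext e
    simp only [mem_filter, Nat.mem_divisors, Nat.dvd_gcd_iff, Nat.gcd_ne_zero_left hd.ne', ne_eq,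
      not_false_eq_true, and_true, hd.ne']
  have step2 : ∑ x' ∈ q'.divisorsAntidiagonal, (μ x'.1 : ℝ) * (if q ∣ x'.2 then (1 : ℝ) else 0) =
      if q' = q then (1 : ℝ) else 0 := by
    refine (ArithmeticFunction.sum_eq_iff_sum_mul_moebius_eq
      (f := fun e => if e = q then (1 : ℝ) else 0)
      (g := fun d => if q ∣ d then (1 : ℝ) else 0)).1 (fun d hd => ?_) q' hq'
    rw [Finset.sum_ite_eq']
    simp [hd.ne']
  rw [Finset.sum_comm]
  calc _ = ∑ x' ∈ q'.divisorsAntidiagonal, (μ x'.1 : ℝ) * (if q ∣ x'.2 then (1 : ℝ) else 0) *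
        ram h q := by
        refine Finset.sum_congr rfl fun x' hx' => ?_
        have hd' : 0 < x'.2 := Nat.pos_of_ne_zero
          (Nat.ne_zero_of_mem_divisorsAntidiagonal hx').2
        have := step1 x'.2 hd'
        calc _ = (μ x'.1 : ℝ) * ∑ x ∈ q.divisorsAntidiagonal,
              (μ x.1 : ℝ) * dvdWeight h (x.2.gcd x'.2) := by
              rw [Finset.mul_sum]; exact Finset.sum_congr rfl fun _ _ => by ring
          _ = _ := by rw [this]; split_ifs <;> ring
    _ = _ := by
        rw [← Finset.sum_mul, step2]
        by_cases e : q = q'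
        · simp [e]
        · simp [e, Ne.symm e]

theorem abs_card_filter_modEq_sub_le (a b v : ℤ) {r : ℕ} (hr : 0 < r) :
    |(#{x ∈ Ico a b | x ≡ v [ZMOD r]} : ℝ) - (#(Ico a b) : ℝ) / r| ≤ 1 := by
  have hr' : (0 : ℤ) < r := by exact_mod_cast hr
  have hrR : (0 : ℝ) < r := by exact_mod_cast hr
  rcases lt_or_ge b a with hab | hab
  · simp [Finset.Ico_eq_empty_of_le hab.le]
  have h := Int.Ico_filter_modEq_card a b hr' v
  have hle : ⌈((a : ℚ) - v) / ((r : ℤ) : ℚ)⌉ ≤ ⌈((b : ℚ) - v) / ((r : ℤ) : ℚ)⌉ := by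
    gcongr
  rw [max_eq_left (by linarith)] at h
  set A := ((a : ℚ) - v) / ((r : ℤ) : ℚ)
  set B := ((b : ℚ) - v) / ((r : ℤ) : ℚ)
  have hBA : B - A = ((b : ℚ) - a) / r := by
    simp only [A, B]; push_cast; field_simp; ring
  have h1 := Int.le_ceil A
  have h2 := Int.ceil_lt_add_one A
  have h3 := Int.le_ceil B
  have h4 := Int.ceil_lt_add_one B
  have hc : ((#(Ico a b) : ℤ) : ℚ) = b - a := by
    rw [Int.card_Ico, Int.toNat_of_nonneg (by linarith)]; push_cast; ring
  have h5 : ((#{x ∈ Ico a b | x ≡ v [ZMOD r]} : ℤ) : ℚ) = ⌈B⌉ - ⌈A⌉ := by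
    rw [h]; push_cast; ring
  have : |(#{x ∈ Ico a b | x ≡ v [ZMOD r]} : ℚ) - (#(Ico a b) : ℚ) / r| ≤ 1 := by
    have e1 : (#{x ∈ Ico a b | x ≡ v [ZMOD r]} : ℚ) = ⌈B⌉ - ⌈A⌉ := by exact_mod_cast h5
    have e2 : (#(Ico a b) : ℚ) = b - a := by exact_mod_cast hc
    rw [e1, e2, ← hBA, abs_le]
    constructor <;> linarith
  have := (Rat.cast_le (K := ℝ)).2 this
  push_cast at this
  exact this

theorem abs_sum_dvdWeight_mul_sub_le (a b s t : ℤ) {d d' : ℕ} (hd : 0 < d) (hd' : 0 < d') :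
    |∑ y ∈ Ico a b, dvdWeight (s - y) d * dvdWeight (t - y) d' -
      #(Ico a b) * dvdWeight (t - s) (d.gcd d')| ≤ d * d' := by
  have hsum : ∑ y ∈ Ico a b, dvdWeight (s - y) d * dvdWeight (t - y) d' =
      d * d' * (#{y ∈ Ico a b | (d : ℤ) ∣ s - y ∧ (d' : ℤ) ∣ t - y} : ℝ) := by
    rw [Finset.card_filter, Nat.cast_sum, Finset.mul_sum]
    refine Finset.sum_congr rfl fun y _ => ?_
    simp only [dvdWeight_apply]
    by_cases h1 : (d : ℤ) ∣ s - y <;> by_cases h2 : (d' : ℤ) ∣ t - y <;> simp [h1, h2]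
  rw [hsum, dvdWeight_apply]
  by_cases hg : ((d.gcd d' : ℕ) : ℤ) ∣ t - s
  · obtain ⟨u, w, huw⟩ : ∃ u w : ℤ, t - s = d * u + d' * w := by
      obtain ⟨c, hc⟩ := hg
      refine ⟨d.gcdA d' * c, d.gcdB d' * c, ?_⟩
      rw [hc, Nat.gcd_eq_gcd_ab]
      ring
    have hiff : ∀ y : ℤ,
        ((d : ℤ) ∣ s - y ∧ (d' : ℤ) ∣ t - y) ↔ y ≡ s + d * u [ZMOD (d.lcm d' : ℕ)] := by
      intro y
      rw [Int.modEq_iff_dvd]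
      have e1 : s + d * u - y = (s - y) + d * u := by ring
      have e2 : s + d * u - y = (t - y) - d' * w := by linarith
      have : ((d.lcm d' : ℕ) : ℤ) ∣ s + d * u - y ↔
          (d : ℤ) ∣ s + d * u - y ∧ (d' : ℤ) ∣ s + d * u - y := by
        rw [← _root_.lcm_dvd_iff]; rfl
      rw [this]
      refine and_congr ?_ ?_
      · rw [e1]; exact (Int.dvd_add_left (dvd_mul_right _ _)).symm
      · rw [e2]; exact (dvd_sub_left (dvd_mul_right _ _)).symm
    simp_rw [hiff]
    rw [if_pos hg]
    have hl : 0 < d.lcm d' := Nat.lcm_pos hd hd'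
    have hlR : (0 : ℝ) < (d.lcm d' : ℕ) := by exact_mod_cast hl
    have h := abs_card_filter_modEq_sub_le a b (s + d * u) hl
    have hgl : ((d.gcd d' : ℕ) : ℝ) * (d.lcm d' : ℕ) = d * d' := by
      exact_mod_cast Nat.gcd_mul_lcm d d'
    set c := (#{x ∈ Ico a b | x ≡ s + d * u [ZMOD (d.lcm d' : ℕ)]} : ℝ)
    have : (d : ℝ) * d' * c - #(Ico a b) * (d.gcd d' : ℕ) =
        d * d' * (c - #(Ico a b) / (d.lcm d' : ℕ)) := by
      rw [← hgl]; field_simp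
    rw [this, abs_mul, abs_of_nonneg (by positivity : (0 : ℝ) ≤ d * d')]
    exact mul_le_of_le_one_right (by positivity) h
  · rw [if_neg hg, mul_zero, sub_zero, Finset.filter_eq_empty_iff.2]
    · simp; positivity
    · rintro y - ⟨h1, h2⟩
      refine hg ?_
      have : t - s = (t - y) - (s - y) := by ring
      rw [this]
      exact dvd_sub ((Int.natCast_dvd_natCast.2 (Nat.gcd_dvd_right _ _)).trans h2)
        ((Int.natCast_dvd_natCast.2 (Nat.gcd_dvd_left _ _)).trans h1)

/-- Approximate orthogonality of Ramanujan sums over an interval. -/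
theorem abs_sum_ram_mul_sub_le (a b s t : ℤ) {q q' : ℕ} (hq : 0 < q) (hq' : 0 < q') :
    |∑ y ∈ Ico a b, ram (s - y) q * ram (t - y) q' -
      #(Ico a b) * (if q = q' then ram (t - s) q else 0)| ≤
      (∑ d ∈ q.divisors, (d : ℝ)) * ∑ d ∈ q'.divisors, (d : ℝ) := by
  have e1 : ∑ y ∈ Ico a b, ram (s - y) q * ram (t - y) q' =
      ∑ x ∈ q.divisorsAntidiagonal, ∑ x' ∈ q'.divisorsAntidiagonal, (μ x.1 : ℝ) * μ x'.1 *
        ∑ y ∈ Ico a b, dvdWeight (s - y) x.2 * dvdWeight (t - y) x'.2 := by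
    simp_rw [ram_apply, Finset.sum_mul_sum, Finset.mul_sum]
    rw [Finset.sum_comm]
    refine Finset.sum_congr rfl fun x _ => ?_
    rw [Finset.sum_comm]
    exact Finset.sum_congr rfl fun x' _ => Finset.sum_congr rfl fun y _ => by ring
  rw [e1, ← sum_moebius_gcd (t - s) hq hq', Finset.mul_sum, ← Finset.sum_sub_distrib,
    ← Nat.sum_divisorsAntidiagonal' (f := fun _ d => (d : ℝ)),
    ← Nat.sum_divisorsAntidiagonal' (f := fun _ d => (d : ℝ)), Finset.sum_mul_sum]
  refine (Finset.abs_sum_le_sum_abs _ _).trans (Finset.sum_le_sum fun x hx => ?_)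
  rw [Finset.mul_sum, ← Finset.sum_sub_distrib]
  refine (Finset.abs_sum_le_sum_abs _ _).trans (Finset.sum_le_sum fun x' hx' => ?_)
  have p1 := Nat.pos_of_ne_zero (Nat.ne_zero_of_mem_divisorsAntidiagonal hx).2
  have p2 := Nat.pos_of_ne_zero (Nat.ne_zero_of_mem_divisorsAntidiagonal hx').2
  have m1 : |(μ x.1 : ℝ)| ≤ 1 := by exact_mod_cast ArithmeticFunction.abs_moebius_le_one (n := x.1)
  have m2 : |(μ x'.1 : ℝ)| ≤ 1 := by
    exact_mod_cast ArithmeticFunction.abs_moebius_le_one (n := x'.1)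
  have := abs_sum_dvdWeight_mul_sub_le a b s t p1 p2
  calc _ = |(μ x.1 : ℝ)| * |(μ x'.1 : ℝ)| *
        |∑ y ∈ Ico a b, dvdWeight (s - y) x.2 * dvdWeight (t - y) x'.2 -
          #(Ico a b) * dvdWeight (t - s) (x.2.gcd x'.2)| := by
        rw [← abs_mul, ← abs_mul]; congr 1; ring
    _ ≤ 1 * 1 * (x.2 * x'.2) := by gcongr
    _ = _ := by ring

/-- `16 ^ ω(q) / q`. -/
def kap (q : ℕ) : ℝ := 16 ^ #q.primeFactors / q

theorem kap_nonneg (q : ℕ) : 0 ≤ kap q := by unfold kap; positivity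

theorem exists_pow_card_primeFactors_le {ε : ℝ} (hε : 0 < ε) :
    ∃ C : ℝ, 0 ≤ C ∧ ∀ q : ℕ, q ≠ 0 → (16 : ℝ) ^ #q.primeFactors ≤ C * (q : ℝ) ^ ε := by
  obtain ⟨P, hP⟩ := exists_nat_ge ((16 : ℝ) ^ (1 / ε))
  refine ⟨16 ^ (P + 1), by positivity, fun q hq => ?_⟩
  have h1 : ∀ p ∈ q.primeFactors,
      (16 : ℝ) ≤ (if p ≤ P then 16 else 1) * (p : ℝ) ^ ε := by
    intro p hp
    have hp1 : (1 : ℝ) ≤ p := by exact_mod_cast (Nat.prime_of_mem_primeFactors hp).one_le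
    split_ifs with h
    · have := Real.one_le_rpow hp1 hε.le
      linarith
    · have h2 : (16 : ℝ) ^ (1 / ε) ≤ p := hP.trans (by exact_mod_cast (not_le.1 h).le)
      have := Real.rpow_le_rpow (by positivity) h2 hε.le
      rwa [← Real.rpow_mul (by norm_num), one_div_mul_cancel hε.ne', Real.rpow_one,
        ← one_mul ((p : ℝ) ^ ε)] at this
  calc (16 : ℝ) ^ #q.primeFactors = ∏ p ∈ q.primeFactors, (16 : ℝ) := by simp
    _ ≤ ∏ p ∈ q.primeFactors, ((if p ≤ P then 16 else 1) * (p : ℝ) ^ ε) :=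
        Finset.prod_le_prod (fun _ _ => by norm_num) h1
    _ = (∏ p ∈ q.primeFactors, if p ≤ P then (16 : ℝ) else 1) *
          ((∏ p ∈ q.primeFactors, p : ℕ) : ℝ) ^ ε := by
        rw [Finset.prod_mul_distrib, Nat.cast_prod, Real.finsetProd_rpow _ _ (by simp)]
    _ ≤ 16 ^ (P + 1) * (q : ℝ) ^ ε := by
        gcongr
        · rw [Finset.prod_ite]
          simp only [prod_const, one_pow, mul_one]
          refine pow_le_pow_right₀ (by norm_num) ?_
          calc #{p ∈ q.primeFactors | p ≤ P} ≤ #(range (P + 1)) :=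
                Finset.card_le_card fun p hp => by
                  simp only [mem_filter] at hp
                  simpa using Nat.lt_succ_of_le hp.2
            _ = P + 1 := by simp
        · exact Nat.le_of_dvd (Nat.pos_of_ne_zero hq) (Nat.prod_primeFactors_dvd q)

theorem exists_kap_le {ε : ℝ} (hε : 0 < ε) :
    ∃ C : ℝ, 0 ≤ C ∧ ∀ s : ℕ, ∀ q ∈ Ico (2 ^ s) (2 ^ (s + 1)),
      kap q ≤ C * (2 : ℝ) ^ ((ε - 1) * s) := by
  obtain ⟨C, hC, h⟩ := exists_pow_card_primeFactors_le hε
  refine ⟨C * 2 ^ ε, by positivity, fun s q hq => ?_⟩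
  rw [mem_Ico] at hq
  have hq1 : (2 : ℝ) ^ s ≤ q := by exact_mod_cast hq.1
  have hq2 : (q : ℝ) ≤ 2 ^ (s + 1) := by exact_mod_cast hq.2.le
  have hq0 : q ≠ 0 := by have := Nat.two_pow_pos s; omega
  calc kap q ≤ C * (2 ^ (s + 1) : ℝ) ^ ε / 2 ^ s := by
        unfold kap
        gcongr
        exact (h q hq0).trans (by gcongr)
    _ = C * 2 ^ ε * (2 : ℝ) ^ ((ε - 1) * s) := by
        rw [← Real.rpow_natCast, ← Real.rpow_natCast, ← Real.rpow_mul (by norm_num),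
          mul_div_assoc, ← Real.rpow_sub (by norm_num), mul_assoc, ← Real.rpow_add (by norm_num)]
        congr 2
        push_cast
        ring

theorem exists_sum_kap_le {ε : ℝ} (hε : 0 < ε) :
    ∃ C : ℝ, 0 ≤ C ∧ ∀ s : ℕ, ∑ q ∈ Ico (2 ^ s) (2 ^ (s + 1)), kap q ≤ C * (2 : ℝ) ^ (ε * s) := by
  obtain ⟨C, hC, h⟩ := exists_kap_le hε
  refine ⟨C, hC, fun s => (Finset.sum_le_card_nsmul _ _ _ (h s)).trans ?_⟩
  rw [Nat.card_Ico, pow_succ, Nat.mul_two, Nat.add_sub_cancel, nsmul_eq_mul]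
  push_cast
  rw [← Real.rpow_natCast, mul_left_comm, ← Real.rpow_add (by norm_num)]
  apply le_of_eq
  congr 2
  ring

theorem exists_sum_kap_sq_le :
    ∃ C : ℝ, 0 ≤ C ∧ ∀ s : ℕ, ∑ q ∈ Ico (2 ^ s) (2 ^ (s + 1)), kap q ^ 2 +
      (∑ q ∈ Ico (2 ^ s) (2 ^ (s + 1)), kap q * q) ^ 2 / 2 ^ (8 * s) ≤
        C * (2 : ℝ) ^ (-(1 / 2 : ℝ) * s) := by
  obtain ⟨C, hC, h⟩ := exists_kap_le (ε := 1 / 4) (by norm_num)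
  refine ⟨C ^ 2 + 4 * C ^ 2, by positivity, fun s => ?_⟩
  have hcard : (#(Ico (2 ^ s) (2 ^ (s + 1))) : ℝ) = (2 : ℝ) ^ (s : ℝ) := by
    rw [Nat.card_Ico, pow_succ, Nat.mul_two, Nat.add_sub_cancel]
    push_cast
    rw [Real.rpow_natCast]
  rw [add_mul]
  refine add_le_add ?_ ?_
  · refine (Finset.sum_le_card_nsmul _ _ ((C * (2 : ℝ) ^ ((1 / 4 - 1 : ℝ) * s)) ^ 2)
      fun q hq => pow_le_pow_left₀ (kap_nonneg q) (h s q hq) 2).trans ?_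
    rw [nsmul_eq_mul, hcard, mul_pow, ← Real.rpow_mul_natCast (by norm_num), mul_left_comm,
      ← Real.rpow_add (by norm_num)]
    apply le_of_eq
    congr 2
    push_cast
    ring
  · have h2 : ∑ q ∈ Ico (2 ^ s) (2 ^ (s + 1)), kap q * q ≤
        2 * C * (2 : ℝ) ^ ((5 / 4 : ℝ) * s) := by
      refine (Finset.sum_le_card_nsmul _ _ (C * (2 : ℝ) ^ ((1 / 4 - 1 : ℝ) * s) *
        (2 : ℝ) ^ ((s : ℝ) + 1)) fun q hq => ?_).trans ?_
      · refine mul_le_mul (h s q hq) ?_ (by positivity) (by positivity)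
        rw [mem_Ico] at hq
        have : (q : ℝ) ≤ 2 ^ (s + 1) := by exact_mod_cast hq.2.le
        exact_mod_cast this
      · rw [nsmul_eq_mul, hcard]
        apply le_of_eq
        rw [Real.rpow_add_one (by norm_num)]
        calc _ = 2 * C * ((2 : ℝ) ^ (s : ℝ) * 2 ^ ((1 / 4 - 1 : ℝ) * s) * 2 ^ (s : ℝ)) := by ring
          _ = _ := by
            rw [← Real.rpow_add (by norm_num), ← Real.rpow_add (by norm_num)]
            congr 2
            ring
    calc _ ≤ (2 * C * (2 : ℝ) ^ ((5 / 4 : ℝ) * s)) ^ 2 / 2 ^ (8 * s) := by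
          gcongr
          exact Finset.sum_nonneg fun q _ => mul_nonneg (kap_nonneg q) (by positivity)
      _ = 4 * C ^ 2 * (2 : ℝ) ^ ((5 / 2 : ℝ) * s - 8 * s) := by
          rw [mul_pow, ← Real.rpow_mul_natCast (by norm_num), Real.rpow_sub (by norm_num)]
          rw [← Real.rpow_natCast 2 (8 * s)]
          push_cast
          ring_nf
      _ ≤ _ := by
          gcongr
          · norm_num
          · have : (0 : ℝ) ≤ s := by positivity
            linarith

/-- Sums over a residue class modulo `d` are controlled by the maximal function of step `d`. -/
theorem sum_dvdWeight_mul_le {L M d : ℕ} (hd : 0 < d) (hdM : d ≤ M) (hL : M < L) (β e x : ℤ)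
    (f : ℤ → ℝ≥0) :
    ∑ m ∈ range M, dvdWeight (m + β) d * (f (x - e * m) : ℝ) ≤
      2 * M * hl L (e * d) f (x - e * ((-β) % d)) := by
  have hd' : (0 : ℤ) < d := by exact_mod_cast hd
  set r : ℤ := (-β) % d
  have hr0 : 0 ≤ r := Int.emod_nonneg _ hd'.ne'
  have hsum : ∑ m ∈ range M, dvdWeight (m + β) d * (f (x - e * m) : ℝ) ≤
      d * ∑ i ∈ range (M / d + 1), (f (x - e * r - e * d * i) : ℝ) := by
    simp only [dvdWeight_apply, ite_mul, zero_mul]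
    rw [← Finset.sum_filter, ← Finset.mul_sum]
    refine mul_le_mul_of_nonneg_left ?_ (by positivity)
    have key : ∀ m : ℕ, (d : ℤ) ∣ m + β → ∃ i : ℕ, (m : ℤ) = r + d * i := by
      intro m hm
      have h1 : (m : ℤ) % d = r := by
        refine Int.ModEq.symm (Int.modEq_iff_dvd.2 ?_)
        simpa using hm
      refine ⟨m / d, ?_⟩
      have := Int.emod_add_mul_ediv (m : ℤ) d
      push_cast
      linarith
    choose! i hi using key
    have hdvd : ∀ m ∈ (range M).filter (fun m : ℕ => (d : ℤ) ∣ m + β), (m : ℤ) = r + d * i m :=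
      fun m hm => hi m (mem_filter.1 hm).2
    calc _ = ∑ m ∈ (range M).filter (fun m : ℕ => (d : ℤ) ∣ m + β),
          (f (x - e * r - e * d * i m) : ℝ) := by
          refine Finset.sum_congr rfl fun m hm => ?_
          have : x - e * m = x - e * r - e * d * i m := by rw [hdvd m hm]; ring
          rw [this]
      _ = ∑ j ∈ ((range M).filter (fun m : ℕ => (d : ℤ) ∣ m + β)).image i,
          (f (x - e * r - e * d * j) : ℝ) := by
          refine (Finset.sum_image (f := fun j : ℕ => (f (x - e * r - e * d * j) : ℝ))
            fun m hm m' hm' h => ?_).symm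
          have h1 := hdvd m hm
          rw [h, ← hdvd m' hm'] at h1
          exact_mod_cast h1
      _ ≤ _ := by
          refine Finset.sum_le_sum_of_subset_of_nonneg (fun j hj => ?_) fun _ _ _ => by positivity
          obtain ⟨m, hm, rfl⟩ := Finset.mem_image.1 hj
          have h1 := hdvd m hm
          have hmM := mem_range.1 (mem_filter.1 hm).1
          rw [mem_range, Nat.lt_succ_iff, Nat.le_div_iff_mul_le hd]
          zify
          nlinarith
  have hle : (∑ i ∈ range (M / d + 1), f (x - e * r - e * d * i)) / (M / d + 1 : ℕ) ≤
      hl L (e * d) f (x - e * r) := by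
    refine Finset.le_sup (f := fun n : ℕ => (∑ i ∈ range n, f (x - e * r - e * d * i)) / (n : ℝ≥0))
      (b := M / d + 1) ?_
    have := Nat.div_le_self M d
    simp; omega
  rw [div_le_iff₀ (by positivity)] at hle
  have hle' : ∑ i ∈ range (M / d + 1), (f (x - e * r - e * d * i) : ℝ) ≤
      hl L (e * d) f (x - e * r) * (M / d + 1 : ℕ) := by exact_mod_cast hle
  have hn : (d : ℝ) * (M / d + 1 : ℕ) ≤ 2 * M := by
    have := Nat.mul_div_le M d
    exact_mod_cast (show d * (M / d + 1) ≤ 2 * M by rw [Nat.mul_add]; omega)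
  calc _ ≤ _ := hsum
    _ ≤ d * (hl L (e * d) f (x - e * r) * (M / d + 1 : ℕ)) := by gcongr
    _ = (d * (M / d + 1 : ℕ)) * hl L (e * d) f (x - e * r) := by ring
    _ ≤ _ := by gcongr

/-- The dyadic block `[2 ^ s, 2 ^ (s + 1))`. -/
def blk (s : ℕ) : Finset ℕ := Ico (2 ^ s) (2 ^ (s + 1))

theorem pos_of_mem_blk {s q : ℕ} (hq : q ∈ blk s) : 0 < q :=
  (Nat.two_pow_pos s).trans_le (mem_Ico.1 hq).1

/-- A combination of Ramanujan sums. -/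
def blockKer (w : ℕ → ℝ) (β : ℤ) (B : Finset ℕ) (n : ℤ) : ℝ := ∑ q ∈ B, w q * ram (n + β) q

/-- The average of `f` against a combination of Ramanujan sums. -/
def blockConv (w : ℕ → ℝ) (β : ℤ) (B : Finset ℕ) (M : ℕ) (f : ℤ → ℝ≥0) (x : ℤ) : ℝ :=
  (∑ m ∈ range M, blockKer w β B m * f (x - m)) / M

/-- The maximal function of `blockConv` over the scales `2 ^ (16 * k)`. -/
def blockMax (w : ℕ → ℕ → ℝ) (β : ℤ) (B : Finset ℕ) (K : ℕ) (f : ℤ → ℝ≥0) (x : ℤ) : ℝ≥0 :=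
  (range K).sup fun k => ‖blockConv (w k) β B (2 ^ (16 * k)) f x‖₊

/-- The size and support conditions on the weights `w k q`. -/
def Adm (w : ℕ → ℕ → ℝ) : Prop :=
  ∀ k q, |w k q| * #q.divisors ≤ kap q ∧ (w k q ≠ 0 → q ≤ 4 ^ k)

/-- The weight `kap q` divided by the number of divisors of `q`. -/
def lam (q : ℕ) : ℝ≥0 := ⟨kap q / #q.divisors, div_nonneg (kap_nonneg q) (by positivity)⟩

theorem lam_mul_card {q : ℕ} (hq : 0 < q) : (lam q : ℝ) * #q.divisors = kap q := by
  have : (#q.divisors : ℝ) ≠ 0 := by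
    simpa [Finset.card_eq_zero, Nat.divisors_eq_empty] using hq.ne'
  exact div_mul_cancel₀ _ this

theorem Adm.abs_le {w : ℕ → ℕ → ℝ} (h : Adm w) (k : ℕ) {q : ℕ} (hq : 0 < q) :
    |w k q| ≤ lam q := by
  have : (0 : ℝ) < #q.divisors := by
    exact_mod_cast Finset.card_pos.2 ⟨1, by simpa using hq.ne'⟩
  exact (le_div_iff₀ this).2 (h k q).1

theorem blockConv_add (w : ℕ → ℝ) (β : ℤ) (B : Finset ℕ) (M : ℕ) (f g : ℤ → ℝ≥0) (x : ℤ) :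
    blockConv w β B M (f + g) x = blockConv w β B M f x + blockConv w β B M g x := by
  simp only [blockConv, Pi.add_apply, NNReal.coe_add, mul_add, Finset.sum_add_distrib, add_div]

theorem blockMax_add_le (w : ℕ → ℕ → ℝ) (β : ℤ) (B : Finset ℕ) (K : ℕ) (f g : ℤ → ℝ≥0) (x : ℤ) :
    blockMax w β B K (f + g) x ≤ blockMax w β B K f x + blockMax w β B K g x := by
  refine Finset.sup_le fun k hk => ?_
  rw [blockConv_add]
  refine (nnnorm_add_le _ _).trans (add_le_add ?_ ?_)
  · exact Finset.le_sup (f := fun k => ‖blockConv (w k) β B (2 ^ (16 * k)) f x‖₊) hk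
  · exact Finset.le_sup (f := fun k => ‖blockConv (w k) β B (2 ^ (16 * k)) g x‖₊) hk

theorem four_pow_le (k : ℕ) : 4 ^ k ≤ 2 ^ (16 * k) := by
  rw [pow_mul]; exact Nat.pow_le_pow_left (by norm_num) k

theorem nnnorm_blockConv_le {w : ℕ → ℕ → ℝ} (hw : Adm w) (β : ℤ) {B : Finset ℕ}
    (hB : ∀ q ∈ B, 0 < q) {k L : ℕ} (hL : 2 ^ (16 * k) < L) (f : ℤ → ℝ≥0) (x : ℤ) :
    ‖blockConv (w k) β B (2 ^ (16 * k)) f x‖₊ ≤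
      ∑ q ∈ B, ∑ d ∈ q.divisors, 2 * lam q * hl L d f (x - (-β) % d) := by
  rw [← NNReal.coe_le_coe, coe_nnnorm, Real.norm_eq_abs]
  push_cast
  unfold blockConv
  set M : ℕ := 2 ^ (16 * k) with hM
  have hM0 : (0 : ℝ) < M := by exact_mod_cast Nat.two_pow_pos _
  rw [abs_div, abs_of_pos hM0, div_le_iff₀ hM0]
  calc |∑ m ∈ range M, blockKer (w k) β B m * (f (x - m) : ℝ)|
      ≤ ∑ m ∈ range M, ∑ q ∈ B, |w k q| * |ram (m + β) q| * (f (x - m) : ℝ) := by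
        refine (Finset.abs_sum_le_sum_abs _ _).trans (Finset.sum_le_sum fun m _ => ?_)
        rw [abs_mul, abs_of_nonneg (f (x - m)).coe_nonneg, ← Finset.sum_mul]
        refine mul_le_mul_of_nonneg_right ?_ (by positivity)
        refine (Finset.abs_sum_le_sum_abs _ _).trans (Finset.sum_le_sum fun q _ => ?_)
        rw [abs_mul]
    _ = ∑ q ∈ B, |w k q| * ∑ m ∈ range M, |ram (m + β) q| * (f (x - m) : ℝ) := by
        rw [Finset.sum_comm]
        simp only [Finset.mul_sum, mul_assoc]
    _ ≤ ∑ q ∈ B, ∑ d ∈ q.divisors, 2 * M * lam q * (hl L d f (x - (-β) % d) : ℝ) := by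
        refine Finset.sum_le_sum fun q hq => ?_
        by_cases h0 : w k q = 0
        · rw [h0, abs_zero, zero_mul]
          positivity
        have hqM : q ≤ M := ((hw k q).2 h0).trans (four_pow_le k)
        calc |w k q| * ∑ m ∈ range M, |ram (m + β) q| * (f (x - m) : ℝ)
            ≤ lam q * ∑ m ∈ range M, ∑ d ∈ q.divisors, dvdWeight (m + β) d * (f (x - m) : ℝ) := by
              refine mul_le_mul (hw.abs_le k (hB q hq)) (Finset.sum_le_sum fun m _ => ?_)
                (by positivity) (by positivity)
              rw [← Finset.sum_mul]
              exact mul_le_mul_of_nonneg_right (abs_ram_le _ _) (by positivity)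
          _ = ∑ d ∈ q.divisors, lam q *
                ∑ m ∈ range M, dvdWeight (m + β) d * (f (x - m) : ℝ) := by
              rw [Finset.sum_comm, Finset.mul_sum]
          _ ≤ _ := by
              refine Finset.sum_le_sum fun d hd => ?_
              have := sum_dvdWeight_mul_le (Nat.pos_of_mem_divisors hd)
                ((Nat.divisor_le hd).trans hqM) hL β 1 x f
              simp only [one_mul] at this
              calc _ ≤ (lam q : ℝ) * (2 * M * hl L d f (x - (-β) % d)) := by gcongr
                _ = _ := by ring
    _ = _ := by
        rw [Finset.sum_mul]
        refine Finset.sum_congr rfl fun q _ => ?_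
        rw [Finset.sum_mul]
        exact Finset.sum_congr rfl fun d _ => by ring

theorem exists_strongType_blockMax {p : ℝ} (hp : 1 < p) :
    ∃ C : ℝ, 0 ≤ C ∧ ∀ w, Adm w → ∀ β K (B : Finset ℕ), (∀ q ∈ B, 0 < q) →
      StrongType (blockMax w β B K) p (ENNReal.ofReal (C * ∑ q ∈ B, kap q)) := by
  obtain ⟨C, hC⟩ := exists_nrm_hl_le hp
  refine ⟨2 * C, by positivity, fun w hw β K B hB f hf => ?_⟩
  have hp0 : 0 < p := by linarith
  set L := 2 ^ (16 * K) + 1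
  have h1 : ∀ x, blockMax w β B K f x ≤
      ∑ q ∈ B, ∑ d ∈ q.divisors, 2 * lam q * hl L d f (x - (-β) % d) := fun x =>
    Finset.sup_le fun k hk => nnnorm_blockConv_le hw β hB (Nat.lt_succ_of_le
      (Nat.pow_le_pow_right (by norm_num) (by have := mem_range.1 hk; omega))) f x
  calc nrm p (blockMax w β B K f) ≤ _ := nrm_mono hp0 h1
    _ ≤ ∑ q ∈ B, ∑ d ∈ q.divisors, ((2 * lam q : ℝ≥0) : ℝ≥0∞) * (C * nrm p f) := by
        refine (nrm_sum_le hp.le _ _).trans (Finset.sum_le_sum fun q _ => ?_)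
        refine (nrm_sum_le hp.le _ _).trans (Finset.sum_le_sum fun d _ => ?_)
        rw [nrm_const_mul hp0, nrm_comp_sub p _ (hl L d f)]
        gcongr
        exact hC L d f hf
    _ = ((∑ q ∈ B, #q.divisors * (2 * lam q) * C : ℝ≥0) : ℝ≥0∞) * nrm p f := by
        simp only [Finset.sum_const, nsmul_eq_mul]
        push_cast
        rw [Finset.sum_mul]
        exact Finset.sum_congr rfl fun q _ => by ring
    _ = _ := by
        congr 1
        rw [← ENNReal.ofReal_coe_nnreal]
        congr 1
        push_cast
        rw [Finset.mul_sum]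
        refine Finset.sum_congr rfl fun q hq => ?_
        rw [← lam_mul_card (hB q hq)]
        ring

theorem dvdWeight_neg (n : ℤ) (d : ℕ) : dvdWeight (-n) d = dvdWeight n d := by
  simp [dvdWeight_apply]

/-- The error term in the almost orthogonality of the block `s`. -/
def blkErr (s : ℕ) : ℝ := (∑ q ∈ blk s, kap q * q) ^ 2 / 2 ^ (8 * s)

theorem blkErr_nonneg (s : ℕ) : 0 ≤ blkErr s := by unfold blkErr; positivity

/-- The majorant of the correlations of the kernels of the block `s`. -/
def maj (s k : ℕ) (h : ℤ) : ℝ :=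
  if |h| < 2 ^ (16 * k) ∧ 2 ^ s ≤ 4 ^ k then
    (∑ q ∈ blk s, (lam q : ℝ) ^ 2 * ∑ d ∈ q.divisors, dvdWeight h d + blkErr s) / 2 ^ (16 * k)
  else 0

theorem maj_nonneg (s k : ℕ) (h : ℤ) : 0 ≤ maj s k h := by
  unfold maj
  split_ifs
  · have := blkErr_nonneg s
    have : 0 ≤ ∑ q ∈ blk s, (lam q : ℝ) ^ 2 * ∑ d ∈ q.divisors, dvdWeight h d :=
      Finset.sum_nonneg fun q _ => mul_nonneg (by positivity)
        (Finset.sum_nonneg fun d _ => dvdWeight_nonneg _ _)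
    positivity
  · exact le_rfl

/-- The convolution kernel of `blockConv`, as a function of two variables. -/
def phi (w : ℕ → ℕ → ℝ) (β : ℤ) (B : Finset ℕ) (k : ℕ) (x y : ℤ) : ℝ :=
  (if y ∈ Ioc (x - 2 ^ (16 * k)) x then blockKer (w k) β B (x - y) else 0) / 2 ^ (16 * k)

theorem blockConv_eq_sum_phi (w : ℕ → ℕ → ℝ) (β : ℤ) (B : Finset ℕ) (k : ℕ) (x : ℤ)
    (f : ℤ → ℝ≥0) {Y : Finset ℤ} (hY : Ioc (x - 2 ^ (16 * k)) x ⊆ Y) :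
    blockConv (w k) β B (2 ^ (16 * k)) f x = ∑ y ∈ Y, phi w β B k x y * f y := by
  unfold blockConv phi
  rw [← Finset.sum_subset hY (fun y _ hy => by rw [if_neg hy]; simp), Finset.sum_div]
  refine Finset.sum_bij (fun m _ => x - (m : ℤ)) ?_ ?_ ?_ ?_
  · intro m hm
    have : (m : ℤ) < 2 ^ (16 * k) := by exact_mod_cast mem_range.1 hm
    rw [mem_Ioc]; constructor <;> linarith [Int.natCast_nonneg m]
  · intro m _ m' _ h
    simpa using h
  · intro y hy
    rw [mem_Ioc] at hy
    refine ⟨(x - y).toNat, ?_, ?_⟩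
    · rw [mem_range]; zify; rw [Int.toNat_of_nonneg (by linarith)]; linarith
    · rw [Int.toNat_of_nonneg (by linarith)]; ring
  · intro m hm
    have : (m : ℤ) < 2 ^ (16 * k) := by exact_mod_cast mem_range.1 hm
    rw [if_pos (by rw [mem_Ioc]; constructor <;> linarith [Int.natCast_nonneg m])]
    simp only [sub_sub_cancel]
    push_cast
    ring

theorem Adm.blockKer_eq_zero {w : ℕ → ℕ → ℝ} (hw : Adm w) (β : ℤ) {s k : ℕ} (h : ¬ 2 ^ s ≤ 4 ^ k)
    (n : ℤ) : blockKer (w k) β (blk s) n = 0 := by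
  refine Finset.sum_eq_zero fun q hq => ?_
  by_cases h0 : w k q = 0
  · simp [h0]
  · exact absurd ((mem_Ico.1 hq).1.trans ((hw k q).2 h0)) h

theorem Adm.sum_abs_mul_le {w : ℕ → ℕ → ℝ} (hw : Adm w) (s k : ℕ) :
    ∑ q ∈ blk s, |w k q| * ∑ d ∈ q.divisors, (d : ℝ) ≤ ∑ q ∈ blk s, kap q * q := by
  refine Finset.sum_le_sum fun q hq => ?_
  have hq0 := pos_of_mem_blk hq
  calc |w k q| * ∑ d ∈ q.divisors, (d : ℝ) ≤ lam q * ∑ d ∈ q.divisors, (q : ℝ) := by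
        gcongr with d hd
        · exact hw.abs_le k hq0
        · exact Nat.divisor_le hd
    _ = _ := by rw [Finset.sum_const, nsmul_eq_mul, ← lam_mul_card hq0]; ring

theorem abs_sum_blockKer_mul_le {w : ℕ → ℕ → ℝ} (hw : Adm w) (β : ℤ) (s j k : ℕ) (a b x x' : ℤ) :
    |∑ y ∈ Ico a b, blockKer (w k) β (blk s) (x - y) * blockKer (w j) β (blk s) (x' - y)| ≤
      #(Ico a b) * ∑ q ∈ blk s, (lam q : ℝ) ^ 2 * ∑ d ∈ q.divisors, dvdWeight (x' - x) d +
        (∑ q ∈ blk s, kap q * q) ^ 2 := by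
  have e : ∑ y ∈ Ico a b, blockKer (w k) β (blk s) (x - y) * blockKer (w j) β (blk s) (x' - y) =
      ∑ q ∈ blk s, ∑ q' ∈ blk s, w k q * w j q' *
        ∑ y ∈ Ico a b, ram ((x + β) - y) q * ram ((x' + β) - y) q' := by
    simp_rw [blockKer, Finset.sum_mul_sum, Finset.mul_sum]
    rw [Finset.sum_comm]
    refine Finset.sum_congr rfl fun q _ => ?_
    rw [Finset.sum_comm]
    refine Finset.sum_congr rfl fun q' _ => Finset.sum_congr rfl fun y _ => ?_
    rw [sub_add_eq_add_sub, sub_add_eq_add_sub]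
    ring
  rw [e]
  have h1 : ∀ q ∈ blk s, ∀ q' ∈ blk s, |w k q * w j q' *
      ∑ y ∈ Ico a b, ram ((x + β) - y) q * ram ((x' + β) - y) q'| ≤
      (if q = q' then #(Ico a b) * ((lam q : ℝ) ^ 2 * ∑ d ∈ q.divisors, dvdWeight (x' - x) d)
        else 0) +
      (|w k q| * ∑ d ∈ q.divisors, (d : ℝ)) * (|w j q'| * ∑ d ∈ q'.divisors, (d : ℝ)) := by
    intro q hq q' hq'
    have h2 := abs_sum_ram_mul_sub_le a b (x + β) (x' + β) (pos_of_mem_blk hq) (pos_of_mem_blk hq')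
    rw [add_sub_add_right_eq_sub] at h2
    set Z := ∑ y ∈ Ico a b, ram ((x + β) - y) q * ram ((x' + β) - y) q'
    set W : ℝ := #(Ico a b) * (if q = q' then ram (x' - x) q else 0)
    have h3 : |Z| ≤ |W| + (∑ d ∈ q.divisors, (d : ℝ)) * ∑ d ∈ q'.divisors, (d : ℝ) := by
      have := abs_add_le (Z - W) W
      rw [sub_add_cancel] at this
      linarith
    have h4 : |w k q| * |w j q'| * |W| ≤ if q = q' then
        #(Ico a b) * ((lam q : ℝ) ^ 2 * ∑ d ∈ q.divisors, dvdWeight (x' - x) d) else 0 := by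
      simp only [W]
      split_ifs with h
      · subst h
        rw [abs_mul, Nat.abs_cast]
        calc _ = (#(Ico a b) : ℝ) * ((|w k q| * |w j q|) * |ram (x' - x) q|) := by ring
          _ ≤ _ := by
            gcongr
            · rw [sq]
              exact mul_le_mul (hw.abs_le _ (pos_of_mem_blk hq)) (hw.abs_le _ (pos_of_mem_blk hq))
                (by positivity) (by positivity)
            · exact abs_ram_le _ _
      · simp
    rw [abs_mul, abs_mul]
    calc _ ≤ |w k q| * |w j q'| *
          (|W| + (∑ d ∈ q.divisors, (d : ℝ)) * ∑ d ∈ q'.divisors, (d : ℝ)) := by gcongr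
      _ = |w k q| * |w j q'| * |W| +
        (|w k q| * ∑ d ∈ q.divisors, (d : ℝ)) * (|w j q'| * ∑ d ∈ q'.divisors, (d : ℝ)) := by ring
      _ ≤ _ := by gcongr
  calc _ ≤ ∑ q ∈ blk s, ∑ q' ∈ blk s, |w k q * w j q' *
        ∑ y ∈ Ico a b, ram ((x + β) - y) q * ram ((x' + β) - y) q'| :=
        (Finset.abs_sum_le_sum_abs _ _).trans (Finset.sum_le_sum fun q _ =>
          Finset.abs_sum_le_sum_abs _ _)
    _ ≤ _ := Finset.sum_le_sum fun q hq => Finset.sum_le_sum fun q' hq' => h1 q hq q' hq'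
    _ = #(Ico a b) * ∑ q ∈ blk s, (lam q : ℝ) ^ 2 * ∑ d ∈ q.divisors, dvdWeight (x' - x) d +
        (∑ q ∈ blk s, |w k q| * ∑ d ∈ q.divisors, (d : ℝ)) *
          ∑ q ∈ blk s, |w j q| * ∑ d ∈ q.divisors, (d : ℝ) := by
        simp_rw [Finset.sum_add_distrib, Finset.sum_mul_sum, Finset.mul_sum (blk s)]
        congr 1
        refine Finset.sum_congr rfl fun q hq => ?_
        rw [Finset.sum_ite_eq, if_pos hq]
    _ ≤ _ := by
        gcongr
        rw [sq]
        exact mul_le_mul (hw.sum_abs_mul_le s k) (hw.sum_abs_mul_le s j)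
          (Finset.sum_nonneg fun _ _ => by positivity)
          (Finset.sum_nonneg fun q _ => mul_nonneg (kap_nonneg q) (by positivity))

theorem abs_sum_phi_mul_le_of_le {w : ℕ → ℕ → ℝ} (hw : Adm w) (β : ℤ) (s : ℕ) {j k : ℕ}
    (hjk : j ≤ k) {x x' : ℤ} {Y : Finset ℤ} (hx : Ioc (x - 2 ^ (16 * k)) x ⊆ Y) :
    |∑ y ∈ Y, phi w β (blk s) k x y * phi w β (blk s) j x' y| ≤ maj s k (x' - x) := by
  by_cases hs : 2 ^ s ≤ 4 ^ j
  swap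
  · rw [Finset.sum_eq_zero fun y _ => by simp [phi, hw.blockKer_eq_zero β hs], abs_zero]
    exact maj_nonneg _ _ _
  have hM : (2 : ℤ) ^ (16 * j) ≤ 2 ^ (16 * k) :=
    pow_le_pow_right₀ (by norm_num) (by omega)
  set a : ℤ := max (x - 2 ^ (16 * k) + 1) (x' - 2 ^ (16 * j) + 1) with ha
  set b : ℤ := min x x' + 1 with hb
  have hmem : ∀ y, y ∈ Ico a b ↔
      y ∈ Ioc (x - 2 ^ (16 * k)) x ∧ y ∈ Ioc (x' - 2 ^ (16 * j)) x' := by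
    intro y
    simp only [mem_Ico, mem_Ioc, ha, hb, max_le_iff, Int.add_one_le_iff, Int.lt_add_one_iff,
      le_min_iff]
    tauto
  have hsum : ∑ y ∈ Y, phi w β (blk s) k x y * phi w β (blk s) j x' y =
      (∑ y ∈ Ico a b, blockKer (w k) β (blk s) (x - y) * blockKer (w j) β (blk s) (x' - y)) /
        (2 ^ (16 * k) * 2 ^ (16 * j)) := by
    rw [← Finset.sum_subset (s₁ := Ico a b) (fun y hy => hx ((hmem y).1 hy).1), Finset.sum_div]
    · refine Finset.sum_congr rfl fun y hy => ?_
      rw [phi, phi, if_pos ((hmem y).1 hy).1, if_pos ((hmem y).1 hy).2]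
      ring
    · intro y _ hy
      rw [hmem, not_and_or] at hy
      rw [phi, phi]
      rcases hy with hy | hy <;> rw [if_neg hy] <;> ring
  rw [hsum]
  rcases (Ico a b).eq_empty_or_nonempty with he | ⟨y₀, hy₀⟩
  · rw [he]; simpa using maj_nonneg _ _ _
  have hh : |x' - x| < 2 ^ (16 * k) := by
    have := (hmem y₀).1 hy₀
    simp only [mem_Ioc] at this
    rw [abs_lt]
    constructor <;> linarith
  have hsk : 2 ^ s ≤ 4 ^ k := hs.trans (Nat.pow_le_pow_right (by norm_num) hjk)
  rw [maj, if_pos ⟨hh, hsk⟩, abs_div, abs_of_pos (by positivity : (0 : ℝ) <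
    2 ^ (16 * k) * 2 ^ (16 * j)), ← div_div, div_right_comm]
  refine div_le_div_of_nonneg_right ?_ (by positivity)
  rw [div_le_iff₀ (by positivity)]
  refine (abs_sum_blockKer_mul_le hw β s j k a b x x').trans ?_
  rw [add_mul]
  refine add_le_add ?_ ?_
  · rw [mul_comm]
    refine mul_le_mul_of_nonneg_left ?_ ?_
    · have h1 : #(Ico a b) ≤ #(Ioc (x' - 2 ^ (16 * j)) x') :=
        Finset.card_le_card fun y hy => ((hmem y).1 hy).2
      rw [Int.card_Ioc] at h1
      have h2 : ((x' - (x' - 2 ^ (16 * j))).toNat : ℤ) = 2 ^ (16 * j) := by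
        rw [sub_sub_cancel, Int.toNat_of_nonneg (by positivity)]
      have h3 : (#(Ico a b) : ℤ) ≤ 2 ^ (16 * j) := by rw [← h2]; exact_mod_cast h1
      exact_mod_cast h3
    · exact Finset.sum_nonneg fun q _ => mul_nonneg (by positivity)
        (Finset.sum_nonneg fun d _ => dvdWeight_nonneg _ _)
  · rw [blkErr, div_mul_eq_mul_div, le_div_iff₀ (by positivity)]
    refine mul_le_mul_of_nonneg_left ?_ (sq_nonneg _)
    have : (2 ^ s) ^ 8 ≤ (4 ^ j) ^ 8 := Nat.pow_le_pow_left hs 8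
    have e1 : (4 ^ j) ^ 8 = 2 ^ (16 * j) := by
      rw [← pow_mul, show 4 = 2 ^ 2 by norm_num, ← pow_mul]; congr 1; ring
    rw [e1, ← pow_mul, mul_comm s 8] at this
    exact_mod_cast this

theorem abs_sum_phi_mul_le {w : ℕ → ℕ → ℝ} (hw : Adm w) (β : ℤ) (s j k : ℕ)
    {x x' : ℤ} {Y : Finset ℤ} (hx : Ioc (x - 2 ^ (16 * k)) x ⊆ Y)
    (hx' : Ioc (x' - 2 ^ (16 * j)) x' ⊆ Y) :
    |∑ y ∈ Y, phi w β (blk s) k x y * phi w β (blk s) j x' y| ≤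
      maj s k (x' - x) + maj s j (x - x') := by
  rcases le_total j k with h | h
  · have := abs_sum_phi_mul_le_of_le hw β s h (x' := x') hx
    linarith [maj_nonneg s j (x - x')]
  · have := abs_sum_phi_mul_le_of_le hw β s h (x' := x) hx'
    simp_rw [mul_comm (phi w β (blk s) j _ _)] at this
    linarith [maj_nonneg s k (x' - x)]

/-- The `TT*` argument for a finite linear operator. -/
theorem sum_sq_le_of_correlation (X Y : Finset ℤ) (Φ : ℤ → ℤ → ℝ) (f : ℤ → ℝ) {D : ℝ} (hD : 0 ≤ D)
    (h : ∑ x ∈ X, ∑ x' ∈ X, |∑ y ∈ Y, Φ x y * f y| * |∑ y ∈ Y, Φ x' y * f y| *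
      |∑ y ∈ Y, Φ x y * Φ x' y| ≤ D * ∑ x ∈ X, (∑ y ∈ Y, Φ x y * f y) ^ 2) :
    ∑ x ∈ X, (∑ y ∈ Y, Φ x y * f y) ^ 2 ≤ D * ∑ y ∈ Y, f y ^ 2 := by
  set u : ℤ → ℝ := fun x => ∑ y ∈ Y, Φ x y * f y with hu
  change ∑ x ∈ X, ∑ x' ∈ X, |u x| * |u x'| * |∑ y ∈ Y, Φ x y * Φ x' y| ≤
    D * ∑ x ∈ X, u x ^ 2 at h
  change ∑ x ∈ X, u x ^ 2 ≤ _
  set S := ∑ x ∈ X, u x ^ 2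
  set F := ∑ y ∈ Y, f y ^ 2
  have hS0 : 0 ≤ S := Finset.sum_nonneg fun _ _ => sq_nonneg _
  have hF0 : 0 ≤ F := Finset.sum_nonneg fun _ _ => sq_nonneg _
  have e1 : S = ∑ y ∈ Y, f y * ∑ x ∈ X, u x * Φ x y := by
    simp_rw [S, sq, Finset.mul_sum]
    rw [Finset.sum_comm]
    refine Finset.sum_congr rfl fun x _ => ?_
    conv_lhs => rw [hu]
    simp only [Finset.sum_mul]
    refine Finset.sum_congr rfl fun y _ => ?_
    simp only [hu]
    ring
  have e2 : ∑ y ∈ Y, (∑ x ∈ X, u x * Φ x y) ^ 2 ≤ D * S := by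
    refine le_trans (le_of_eq ?_) ((Finset.sum_le_sum fun x _ => Finset.sum_le_sum fun x' _ =>
      ?_).trans h) (b := ∑ x ∈ X, ∑ x' ∈ X, u x * u x' * ∑ y ∈ Y, Φ x y * Φ x' y)
    · simp_rw [sq, Finset.sum_mul_sum, Finset.mul_sum]
      rw [Finset.sum_comm]
      refine Finset.sum_congr rfl fun x _ => ?_
      rw [Finset.sum_comm]
      exact Finset.sum_congr rfl fun x' _ => Finset.sum_congr rfl fun y _ => by ring
    · rw [← abs_mul, ← abs_mul]
      exact le_abs_self _
  have e3 : S ^ 2 ≤ F * (D * S) := by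
    rw [e1]
    refine (Finset.sum_mul_sq_le_sq_mul_sq _ _ _).trans ?_
    rw [← e1]
    gcongr
  rcases hS0.eq_or_lt with h0 | h0
  · rw [← h0]; positivity
  · nlinarith


theorem sum_filter_dvdWeight_mul_le {L M d : ℕ} (hd : 0 < d) (hdM : d ≤ M) (hL : M < L) (x : ℤ)
    (v : ℤ → ℝ≥0) (X : Finset ℤ) :
    ∑ x' ∈ X with |x' - x| < M, (v x' : ℝ) * dvdWeight (x' - x) d ≤
      2 * M * (hl L d v x + hl L (-d) v x) := by
  have h1 := sum_dvdWeight_mul_le hd hdM hL 0 1 x v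
  have h2 := sum_dvdWeight_mul_le hd hdM hL 0 (-1) x v
  simp only [add_zero, one_mul, neg_zero, Int.zero_emod, mul_zero, sub_zero, neg_mul,
    sub_neg_eq_add] at h1 h2
  have hsub : {x' ∈ X | |x' - x| < M} ⊆
      (range M).image (fun m : ℕ => x - (m : ℤ)) ∪ (range M).image (fun m : ℕ => x + (m : ℤ)) := by
    intro x' hx'
    have h := abs_lt.1 (mem_filter.1 hx').2
    rw [mem_union, mem_image, mem_image]
    rcases le_total x' x with hle | hle
    · exact .inl ⟨(x - x').toNat, by rw [mem_range]; omega, by omega⟩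
    · exact .inr ⟨(x' - x).toNat, by rw [mem_range]; omega, by omega⟩
  have hnn : ∀ x', 0 ≤ (v x' : ℝ) * dvdWeight (x' - x) d := fun x' =>
    mul_nonneg (by positivity) (dvdWeight_nonneg _ _)
  have hun := Finset.sum_union_inter (s₁ := (range M).image (fun m : ℕ => x - (m : ℤ)))
    (s₂ := (range M).image (fun m : ℕ => x + (m : ℤ)))
    (f := fun x' => (v x' : ℝ) * dvdWeight (x' - x) d)
  have hintg := Finset.sum_nonneg (s := (range M).image (fun m : ℕ => x - (m : ℤ)) ∩
    (range M).image (fun m : ℕ => x + (m : ℤ))) fun x' _ => hnn x'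
  have hi1 := Finset.sum_image (s := range M) (g := fun m : ℕ => x - (m : ℤ))
    (f := fun x' => (v x' : ℝ) * dvdWeight (x' - x) d) (by intro a _ b _ h; simpa using h)
  have hi2 := Finset.sum_image (s := range M) (g := fun m : ℕ => x + (m : ℤ))
    (f := fun x' => (v x' : ℝ) * dvdWeight (x' - x) d) (by intro a _ b _ h; simpa using h)
  have hs := Finset.sum_le_sum_of_subset_of_nonneg hsub fun x' _ _ => hnn x'
  simp only [sub_sub_cancel_left, dvdWeight_neg, add_sub_cancel_left] at hi1 hi2
  simp_rw [mul_comm (dvdWeight _ _)] at h1 h2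
  linarith

/-- The maximal function dominating the majorants `maj s k` for all `k`. -/
def majMax (s L : ℕ) (v : ℤ → ℝ≥0) (x : ℤ) : ℝ≥0 :=
  ∑ q ∈ blk s, ∑ d ∈ q.divisors, 2 * lam q ^ 2 * (hl L d v x + hl L (-d) v x) +
    2 * (blkErr s).toNNReal * (hl L 1 v x + hl L (-1) v x)

theorem sum_mul_maj_le {s k L : ℕ} (hL : 2 ^ (16 * k) < L) (X : Finset ℤ) (v : ℤ → ℝ≥0) (x : ℤ) :
    ∑ x' ∈ X, (v x' : ℝ) * maj s k (x' - x) ≤ majMax s L v x := by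
  by_cases hs : 2 ^ s ≤ 4 ^ k
  swap
  · simp [maj, hs]
  have hdM : ∀ q ∈ blk s, ∀ d ∈ q.divisors, d ≤ 2 ^ (16 * k) := by
    intro q hq d hd
    have h1 := (Nat.divisor_le hd).trans_lt (mem_Ico.1 hq).2
    have h2 : (2 ^ s) ^ 8 ≤ (4 ^ k) ^ 8 := Nat.pow_le_pow_left hs 8
    have e1 : (4 ^ k) ^ 8 = 2 ^ (16 * k) := by
      rw [← pow_mul, show 4 = 2 ^ 2 by norm_num, ← pow_mul]; congr 1; ring
    have h3 : 2 ^ (s + 1) ≤ (2 ^ s) ^ 8 + 1 := by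
      have h4 := Nat.two_pow_pos s
      have h5 : (2 ^ s) ^ 2 ≤ (2 ^ s) ^ 8 := Nat.pow_le_pow_right h4 (by norm_num)
      rw [pow_succ]
      nlinarith [sq_nonneg ((2 ^ s : ℤ) - 1)]
    omega
  have hM : (0 : ℝ) < (2 ^ (16 * k) : ℕ) := by positivity
  have e : ∑ x' ∈ X, (v x' : ℝ) * maj s k (x' - x) =
      (∑ q ∈ blk s, ∑ d ∈ q.divisors, (lam q : ℝ) ^ 2 *
        (∑ x' ∈ X with |x' - x| < (2 ^ (16 * k) : ℕ), (v x' : ℝ) * dvdWeight (x' - x) d) +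
      blkErr s * ∑ x' ∈ X with |x' - x| < (2 ^ (16 * k) : ℕ),
        (v x' : ℝ) * dvdWeight (x' - x) 1) / (2 ^ (16 * k) : ℕ) := by
    have e0 : ∀ x', (v x' : ℝ) * maj s k (x' - x) = if |x' - x| < (2 ^ (16 * k) : ℕ) then
        (∑ q ∈ blk s, ∑ d ∈ q.divisors, (lam q : ℝ) ^ 2 * ((v x' : ℝ) * dvdWeight (x' - x) d) +
        blkErr s * ((v x' : ℝ) * dvdWeight (x' - x) 1)) / (2 ^ (16 * k) : ℕ) else 0 := by
      intro x'
      simp only [maj, hs, and_true, Nat.cast_pow, Nat.cast_ofNat]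
      split_ifs
      · simp only [dvdWeight_apply (d := 1), Nat.cast_one, one_dvd, if_true, Finset.mul_sum,
          mul_add, add_div, ← mul_div_assoc]
        congr 2
        · refine Finset.sum_congr rfl fun q _ => Finset.sum_congr rfl fun d _ => by ring
        · ring
      · simp
    simp_rw [e0]
    rw [← Finset.sum_filter, ← Finset.sum_div, Finset.sum_add_distrib, Finset.sum_comm,
      ← Finset.mul_sum]
    congr 2
    refine Finset.sum_congr rfl fun q _ => ?_
    rw [Finset.sum_comm]
    exact Finset.sum_congr rfl fun d _ => (Finset.mul_sum _ _ _).symm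
  rw [e, div_le_iff₀ hM, majMax]
  push_cast
  rw [Real.coe_toNNReal _ (blkErr_nonneg s), add_mul, Finset.sum_mul]
  simp_rw [Finset.sum_mul]
  refine add_le_add (Finset.sum_le_sum fun q hq => Finset.sum_le_sum fun d hd => ?_) ?_
  · have := sum_filter_dvdWeight_mul_le (Nat.pos_of_mem_divisors hd) (hdM q hq d hd) hL x v X
    push_cast at this
    calc _ ≤ (lam q : ℝ) ^ 2 * (2 * 2 ^ (16 * k) * (hl L d v x + hl L (-d) v x)) := by gcongr
      _ = _ := by ring
  · have := sum_filter_dvdWeight_mul_le one_pos (Nat.two_pow_pos (16 * k)) hL x v X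
    push_cast at this
    calc _ ≤ blkErr s * (2 * 2 ^ (16 * k) * (hl L 1 v x + hl L (-1) v x)) :=
        mul_le_mul_of_nonneg_left this (blkErr_nonneg s)
      _ = _ := by ring

theorem exists_nrm_majMax_le : ∃ C : ℝ, 0 ≤ C ∧ ∀ s L v, v.support.Finite →
    nrm 2 (majMax s L v) ≤ ENNReal.ofReal (C * (∑ q ∈ blk s, kap q ^ 2 + blkErr s)) * nrm 2 v := by
  obtain ⟨C, hC⟩ := exists_nrm_hl_le (p := 2) (by norm_num)
  refine ⟨4 * C, by positivity, fun s L v hv => ?_⟩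
  have h2 : (1 : ℝ) ≤ 2 := by norm_num
  have hpair : ∀ (c : ℝ≥0) (d : ℤ), nrm 2 (fun x => c * (hl L d v x + hl L (-d) v x)) ≤
      ((2 * c * C : ℝ≥0) : ℝ≥0∞) * nrm 2 v := by
    intro c d
    rw [nrm_const_mul (by norm_num)]
    calc _ ≤ (c : ℝ≥0∞) * (C * nrm 2 v + C * nrm 2 v) := by
          gcongr
          exact (nrm_add_le h2 _ _).trans (add_le_add (hC L d v hv) (hC L (-d) v hv))
      _ = _ := by push_cast; ring
  calc nrm 2 (majMax s L v) ≤ _ := nrm_add_le h2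
        (fun x => ∑ q ∈ blk s, ∑ d ∈ q.divisors, 2 * lam q ^ 2 * (hl L d v x + hl L (-d) v x))
        (fun x => 2 * (blkErr s).toNNReal * (hl L 1 v x + hl L (-1) v x))
    _ ≤ ∑ q ∈ blk s, ∑ d ∈ q.divisors, ((2 * (2 * lam q ^ 2) * C : ℝ≥0) : ℝ≥0∞) * nrm 2 v +
        ((2 * (2 * (blkErr s).toNNReal) * C : ℝ≥0) : ℝ≥0∞) * nrm 2 v := by
        refine add_le_add ?_ (hpair _ _)
        refine (nrm_sum_le h2 _ _).trans (Finset.sum_le_sum fun q _ => ?_)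
        exact (nrm_sum_le h2 _ _).trans (Finset.sum_le_sum fun d _ => hpair _ _)
    _ = ((∑ q ∈ blk s, #q.divisors * (2 * (2 * lam q ^ 2) * C) +
        2 * (2 * (blkErr s).toNNReal) * C : ℝ≥0) : ℝ≥0∞) * nrm 2 v := by
        simp only [Finset.sum_const, nsmul_eq_mul]
        push_cast
        rw [add_mul, Finset.sum_mul]
        congr 1
        exact Finset.sum_congr rfl fun q _ => by ring
    _ ≤ _ := by
        gcongr
        rw [← ENNReal.ofReal_coe_nnreal]
        refine ENNReal.ofReal_le_ofReal ?_
        push_cast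
        rw [Real.coe_toNNReal _ (blkErr_nonneg s), mul_add, Finset.mul_sum]
        refine add_le_add (Finset.sum_le_sum fun q hq => ?_) (le_of_eq (by ring))
        rw [← lam_mul_card (pos_of_mem_blk hq)]
        have h1 : (1 : ℝ) ≤ #q.divisors := by
          exact_mod_cast Finset.card_pos.2 ⟨1, by simpa using (pos_of_mem_blk hq).ne'⟩
        calc _ = 4 * C * (lam q : ℝ) ^ 2 * (#q.divisors * 1 : ℝ) := by ring
          _ ≤ 4 * C * (lam q : ℝ) ^ 2 * (#q.divisors * #q.divisors : ℝ) := by gcongr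
          _ = _ := by ring

theorem sum_sq_le_of_nrm_le {D : ℝ} (hD : 0 ≤ D) {X : Finset ℤ} {g v : ℤ → ℝ≥0}
    (hv : ∀ x ∉ X, v x = 0) (h : nrm 2 g ≤ ENNReal.ofReal D * nrm 2 v) :
    ∑ x ∈ X, (g x : ℝ) ^ 2 ≤ D ^ 2 * ∑ x ∈ X, (v x : ℝ) ^ 2 := by
  have h1 := ENNReal.rpow_le_rpow h (z := 2) (by norm_num)
  rw [ENNReal.mul_rpow_of_nonneg _ _ (by norm_num), nrm_rpow (by norm_num),
    nrm_rpow (by norm_num), tsum_eq_sum (s := X) (f := fun x => (v x : ℝ≥0∞) ^ (2 : ℝ))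
    fun x hx => by simp [hv x hx]] at h1
  have h2 := (ENNReal.sum_le_tsum X).trans h1
  simp only [ENNReal.rpow_two] at h2
  lift D to ℝ≥0 using hD
  rw [ENNReal.ofReal_coe_nnreal] at h2
  exact_mod_cast h2

theorem sum_blockMax_sq_le {w : ℕ → ℕ → ℝ} (hw : Adm w) (β : ℤ) (K s : ℕ) {D : ℝ} (hD : 0 ≤ D)
    (hH : ∀ L v, v.support.Finite → nrm 2 (majMax s L v) ≤ ENNReal.ofReal D * nrm 2 v)
    (f : ℤ → ℝ≥0) (X : Finset ℤ) :
    ∃ Y : Finset ℤ, ∑ x ∈ X, (blockMax w β (blk s) K f x : ℝ) ^ 2 ≤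
      2 * D * ∑ y ∈ Y, (f y : ℝ) ^ 2 := by
  rcases K.eq_zero_or_pos with rfl | hK
  · exact ⟨∅, by simp [blockMax]⟩
  have hex : ∀ x, ∃ k < K, blockMax w β (blk s) K f x =
      ‖blockConv (w k) β (blk s) (2 ^ (16 * k)) f x‖₊ := by
    intro x
    obtain ⟨k, hk, h⟩ := Finset.exists_mem_eq_sup (range K) ⟨0, by simpa using hK⟩
      fun k => ‖blockConv (w k) β (blk s) (2 ^ (16 * k)) f x‖₊
    exact ⟨k, mem_range.1 hk, h⟩
  choose κ hκ hκ' using hex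
  have hM : ∀ x, (2 : ℤ) ^ (16 * κ x) ≤ 2 ^ (16 * K) := fun x =>
    pow_le_pow_right₀ (by norm_num) (by have := hκ x; omega)
  set Y : Finset ℤ := X.biUnion fun x => Ioc (x - 2 ^ (16 * K)) x
  have hY : ∀ x ∈ X, Ioc (x - 2 ^ (16 * κ x)) x ⊆ Y := fun x hx =>
    (Ioc_subset_Ioc_left (by have := hM x; linarith)).trans
      (Finset.subset_biUnion_of_mem (fun x => Ioc (x - 2 ^ (16 * K)) x) hx)
  refine ⟨Y, ?_⟩
  set v : ℤ → ℝ≥0 := fun x => if x ∈ X then blockMax w β (blk s) K f x else 0 with hv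
  set Φ : ℤ → ℤ → ℝ := fun x y => phi w β (blk s) (κ x) x y
  have hu : ∀ x ∈ X, |∑ y ∈ Y, Φ x y * f y| = v x := by
    intro x hx
    rw [← blockConv_eq_sum_phi w β (blk s) (κ x) x f (hY x hx)]
    simp only [hv, if_pos hx, hκ' x, coe_nnnorm, Real.norm_eq_abs]
  have hu2 : ∑ x ∈ X, (∑ y ∈ Y, Φ x y * f y) ^ 2 = ∑ x ∈ X, (v x : ℝ) ^ 2 :=
    Finset.sum_congr rfl fun x hx => by rw [← sq_abs, hu x hx]
  have hv2 : ∑ x ∈ X, (blockMax w β (blk s) K f x : ℝ) ^ 2 = ∑ x ∈ X, (v x : ℝ) ^ 2 :=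
    Finset.sum_congr rfl fun x hx => by simp only [hv, if_pos hx]
  rw [hv2, ← hu2]
  refine sum_sq_le_of_correlation X Y Φ (fun y => f y) (by positivity) ?_
  rw [hu2]
  set L := 2 ^ (16 * K) + 1
  have hvX : ∀ x ∉ X, v x = 0 := fun x hx => by simp only [hv, if_neg hx]
  have hvfin : v.support.Finite := X.finite_toSet.subset fun x hx => by
    by_contra h
    exact hx (hvX x h)
  have hHs := sum_sq_le_of_nrm_le hD hvX (hH L v hvfin)
  have hcs : ∑ x ∈ X, (v x : ℝ) * majMax s L v x ≤ D * ∑ x ∈ X, (v x : ℝ) ^ 2 := by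
    refine le_of_sq_le_sq ?_ (by positivity)
    calc _ ≤ (∑ x ∈ X, (v x : ℝ) ^ 2) * ∑ x ∈ X, (majMax s L v x : ℝ) ^ 2 :=
          Finset.sum_mul_sq_le_sq_mul_sq _ _ _
      _ ≤ (∑ x ∈ X, (v x : ℝ) ^ 2) * (D ^ 2 * ∑ x ∈ X, (v x : ℝ) ^ 2) := by gcongr
      _ = _ := by ring
  calc _ ≤ ∑ x ∈ X, ∑ x' ∈ X, (v x : ℝ) * v x' *
        (maj s (κ x) (x' - x) + maj s (κ x') (x - x')) := by
        refine Finset.sum_le_sum fun x hx => Finset.sum_le_sum fun x' hx' => ?_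
        rw [hu x hx, hu x' hx']
        gcongr
        exact abs_sum_phi_mul_le hw β s _ _ (hY x hx) (hY x' hx')
    _ = 2 * ∑ x ∈ X, (v x : ℝ) * ∑ x' ∈ X, (v x' : ℝ) * maj s (κ x) (x' - x) := by
        simp_rw [mul_add, Finset.sum_add_distrib]
        rw [two_mul]
        congr 1
        · simp_rw [Finset.mul_sum, mul_assoc]
        · rw [Finset.sum_comm]
          simp_rw [Finset.mul_sum]
          exact Finset.sum_congr rfl fun x _ => Finset.sum_congr rfl fun x' _ => by ring
    _ ≤ 2 * ∑ x ∈ X, (v x : ℝ) * majMax s L v x := by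
        gcongr with x hx
        exact sum_mul_maj_le (Nat.lt_succ_of_le (Nat.pow_le_pow_right (by norm_num)
          (by have := hκ x; omega))) X v x
    _ ≤ _ := by linarith

theorem exists_strongType_two_blockMax :
    ∃ C : ℝ, 0 ≤ C ∧ ∀ w, Adm w → ∀ β K s,
      StrongType (blockMax w β (blk s) K) 2 (ENNReal.ofReal (C * 2 ^ (-(1 / 4) * s : ℝ))) := by
  obtain ⟨C₁, hC₁, h₁⟩ := exists_nrm_majMax_le
  obtain ⟨C₂, hC₂, h₂⟩ := exists_sum_kap_sq_le
  refine ⟨(2 * C₁ * C₂) ^ (1 / 2 : ℝ), by positivity, fun w hw β K s f _ => ?_⟩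
  set D := C₁ * (C₂ * (2 : ℝ) ^ (-(1 / 2 : ℝ) * s)) with hD
  have hD0 : 0 ≤ D := by positivity
  have hH : ∀ L v, v.support.Finite → nrm 2 (majMax s L v) ≤ ENNReal.ofReal D * nrm 2 v := by
    intro L v hv
    refine (h₁ s L v hv).trans ?_
    gcongr
    rw [hD]
    exact mul_le_mul_of_nonneg_left (h₂ s) hC₁
  have key : ∑' x, (blockMax w β (blk s) K f x : ℝ≥0∞) ^ (2 : ℝ) ≤
      ENNReal.ofReal (2 * D) * ∑' x, (f x : ℝ≥0∞) ^ (2 : ℝ) := by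
    rw [ENNReal.tsum_eq_iSup_sum]
    refine iSup_le fun X => ?_
    obtain ⟨Y, hY⟩ := sum_blockMax_sq_le hw β K s hD0 hH f X
    refine le_trans ?_ (mul_le_mul_right (ENNReal.sum_le_tsum Y) _)
    simp only [ENNReal.rpow_two]
    have h2D : 0 ≤ 2 * D := by positivity
    generalize 2 * D = E at hY h2D
    lift E to ℝ≥0 using h2D
    rw [ENNReal.ofReal_coe_nnreal]
    exact_mod_cast hY
  refine (nrm_le_of_tsum_le (by norm_num) key).trans ?_
  gcongr
  rw [ENNReal.ofReal_rpow_of_nonneg (by positivity) (by norm_num)]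
  refine ENNReal.ofReal_le_ofReal (le_of_eq ?_)
  rw [hD, show 2 * (C₁ * (C₂ * (2 : ℝ) ^ (-(1 / 2 : ℝ) * s))) =
    (2 * C₁ * C₂) * (2 : ℝ) ^ (-(1 / 2 : ℝ) * s) by ring,
    Real.mul_rpow (by positivity) (by positivity), ← Real.rpow_mul (by norm_num)]
  congr 2
  ring

theorem exists_strongType_geometric_blockMax {r : ℝ} (hr : 1 < r) :
    ∃ C c : ℝ, 0 ≤ C ∧ 0 < c ∧ ∀ w, Adm w → ∀ β K s,
      StrongType (blockMax w β (blk s) K) r (ENNReal.ofReal (C * 2 ^ (-c * s : ℝ))) := by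
  have hp : ∀ p : ℝ, 1 < p → ∀ ε : ℝ, 0 < ε → ∃ C : ℝ, 0 ≤ C ∧ ∀ w, Adm w → ∀ β K s,
      StrongType (blockMax w β (blk s) K) p (ENNReal.ofReal (C * 2 ^ (ε * s : ℝ))) := by
    intro p hp ε hε
    obtain ⟨C, hC, h⟩ := exists_strongType_blockMax hp
    obtain ⟨C', hC', h'⟩ := exists_sum_kap_le hε
    refine ⟨C * C', by positivity, fun w hw β K s f hf => ?_⟩
    refine (h w hw β K (blk s) (fun q hq => pos_of_mem_blk hq) f hf).trans ?_
    refine mul_le_mul_left (ENNReal.ofReal_le_ofReal ?_) _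
    rw [mul_assoc]
    exact mul_le_mul_of_nonneg_left (h' s) hC
  obtain ⟨C₂, hC₂, h₂⟩ := exists_strongType_two_blockMax
  rcases lt_trichotomy r 2 with h | h | h
  · obtain ⟨C₁, hC₁, h₁⟩ := hp ((1 + r) / 2) (by linarith) ((r - 1) * (2 - r) / 100)
      (by apply div_pos (mul_pos _ _) <;> linarith)
    obtain ⟨C, c, hC, hc, H⟩ := exists_geometric_interpolation (p₀ := (1 + r) / 2) (p₁ := 2)
      (r := r) (e₀ := (r - 1) * (2 - r) / 100) (e₁ := -(1 / 4)) (η := (2 - r)/10)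
      (by linarith) (by linarith) h hC₁ hC₂ (by nlinarith [mul_pos (sub_pos.2 hr) (sub_pos.2 h)])
      (by nlinarith)
    exact ⟨C, c, hC, hc, fun w hw β K s => H s _ (blockMax_add_le w β _ K)
      (h₁ w hw β K s) (h₂ w hw β K s)⟩
  · subst h
    exact ⟨C₂, 1 / 4, hC₂, by norm_num, h₂⟩
  · set η : ℝ := -(1 / (4 * (r - 2))) with hη
    have hr2 : 0 < r - 2 := by linarith
    have e : η * (r - 2) = -(1 / 4) := by rw [hη]; field_simp
    have hη0 : η < 0 := by rw [hη, neg_lt_zero]; positivity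
    obtain ⟨C₁, hC₁, h₁⟩ := hp (r + 1) (by linarith) (-η / (2 * (r + 1)))
      (div_pos (by linarith) (by linarith))
    obtain ⟨C, c, hC, hc, H⟩ := exists_geometric_interpolation (p₀ := 2) (p₁ := r + 1)
      (r := r) (e₀ := -(1 / 4)) (e₁ := -η / (2 * (r + 1))) (η := η)
      (by norm_num) h (by linarith) hC₂ hC₁ (by nlinarith)
      (by
        have : -η / (2 * (r + 1)) * (r + 1) = -η / 2 := by field_simp
        rw [this]
        linarith)
    exact ⟨C, c, hC, hc, fun w hw β K s => H s _ (blockMax_add_le w β _ K)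
      (h₂ w hw β K s) (h₁ w hw β K s)⟩

/-- The maximal function over all scales for admissible combinations of Ramanujan sums. -/
theorem exists_nrm_sup_blockConv_le {r : ℝ} (hr : 1 < r) :
    ∃ C : ℝ≥0, ∀ w, Adm w → ∀ β K, ∀ f : ℤ → ℝ≥0, f.support.Finite →
      nrm r (fun x => (range K).sup fun k =>
        ‖blockConv (w k) β (Ico 1 (4 ^ K)) (2 ^ (16 * k)) f x‖₊) ≤ C * nrm r f := by
  obtain ⟨C, c, hC, hc, h⟩ := exists_strongType_geometric_blockMax hr
  have hρ0 : (0 : ℝ) ≤ (2 : ℝ) ^ (-c) := by positivity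
  have hρ1 : (2 : ℝ) ^ (-c) < 1 := Real.rpow_lt_one_of_one_lt_of_neg (by norm_num) (by linarith)
  refine ⟨(C * (1 - (2 : ℝ) ^ (-c))⁻¹).toNNReal, fun w hw β K f hf => ?_⟩
  have hdec : ∀ S : ℕ, Ico 1 (2 ^ S) = (range S).biUnion blk := by
    intro S
    induction S with
    | zero => simp
    | succ S ih =>
      rw [Finset.range_add_one, Finset.biUnion_insert, ← ih, Finset.union_comm, blk,
        Finset.Ico_union_Ico_eq_Ico Nat.one_le_two_pow
          (Nat.pow_le_pow_right (by norm_num) (Nat.le_succ S))]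
  have hdisj : ((range (2 * K) : Finset ℕ) : Set ℕ).PairwiseDisjoint blk := by
    intro i _ j _ hij
    rw [Function.onFun, Finset.disjoint_left]
    intro q hi hj
    rw [blk, mem_Ico] at hi hj
    rcases lt_or_gt_of_ne hij with h | h
    · have := Nat.pow_le_pow_right (n := 2) (by norm_num) (Nat.succ_le_of_lt h)
      have := this.trans hj.1
      simp only [Nat.succ_eq_add_one] at this
      omega
    · have := Nat.pow_le_pow_right (n := 2) (by norm_num) (Nat.succ_le_of_lt h)
      have := this.trans hi.1
      simp only [Nat.succ_eq_add_one] at this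
      omega
  have hpt : ∀ x, ((range K).sup fun k =>
      ‖blockConv (w k) β (Ico 1 (4 ^ K)) (2 ^ (16 * k)) f x‖₊) ≤
      ∑ s ∈ range (2 * K), blockMax w β (blk s) K f x := by
    intro x
    refine Finset.sup_le fun k hk => ?_
    have : blockConv (w k) β (Ico 1 (4 ^ K)) (2 ^ (16 * k)) f x =
        ∑ s ∈ range (2 * K), blockConv (w k) β (blk s) (2 ^ (16 * k)) f x := by
      simp only [blockConv, blockKer]
      rw [show 4 ^ K = 2 ^ (2 * K) by rw [pow_mul]; norm_num, hdec]
      simp_rw [Finset.sum_biUnion hdisj, Finset.sum_mul]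
      rw [Finset.sum_comm, Finset.sum_div]
    rw [this]
    refine (nnnorm_sum_le _ _).trans (Finset.sum_le_sum fun s _ => ?_)
    exact Finset.le_sup (f := fun k => ‖blockConv (w k) β (blk s) (2 ^ (16 * k)) f x‖₊) hk
  calc _ ≤ _ := nrm_mono (by linarith) hpt
    _ ≤ ∑ s ∈ range (2 * K), ENNReal.ofReal (C * 2 ^ (-c * s : ℝ)) * nrm r f :=
        (nrm_sum_le hr.le _ _).trans (Finset.sum_le_sum fun s _ => h w hw β K s f hf)
    _ = ENNReal.ofReal (∑ s ∈ range (2 * K), C * 2 ^ (-c * s : ℝ)) * nrm r f := by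
        rw [← Finset.sum_mul, ENNReal.ofReal_sum_of_nonneg fun _ _ => by positivity]
    _ ≤ _ := by
        change _ ≤ ENNReal.ofReal _ * _
        gcongr
        rw [← Finset.mul_sum]
        gcongr
        simp_rw [Real.rpow_mul (by norm_num : (0 : ℝ) ≤ 2), Real.rpow_natCast]
        rw [← tsum_geometric_of_lt_one hρ0 hρ1]
        exact (summable_geometric_of_lt_one hρ0 hρ1).sum_le_tsum _ fun _ _ => by positivity

/-- The subsets of `P` with product at most `R`. -/
def selS (P : Finset ℕ) (R : ℕ) : Finset (Finset ℕ) := {S ∈ P.powerset | ∏ p ∈ S, p ≤ R}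

/-- The multiplicative weight `∏_{p ∈ S} 1 / (p - 1)`. -/
def wt (S : Finset ℕ) : ℝ := ∏ p ∈ S, ((p : ℝ) - 1)⁻¹

/-- The normalizing constant of the Selberg sieve. -/
def selG (P : Finset ℕ) (R : ℕ) : ℝ := ∑ S ∈ selS P R, wt S

/-- The Selberg sieve sum, diagonalized through Ramanujan sums. -/
def selLam (P : Finset ℕ) (R : ℕ) (n : ℤ) : ℝ :=
  ∑ S ∈ selS P R, ∏ p ∈ S, (-((p : ℝ) - 1)⁻¹ * ram n p)

/-- The index set for the expansion of the square of `selLam`. -/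
def selT (P : Finset ℕ) (R : ℕ) : Finset (Finset ℕ × Finset ℕ × Finset ℕ) :=
  {t ∈ selS P R ×ˢ selS P R ×ˢ P.powerset | t.2.2 ⊆ t.1 ∩ t.2.1}

/-- The set of primes attached to an index. -/
def selQ (t : Finset ℕ × Finset ℕ × Finset ℕ) : Finset ℕ :=
  (t.1 \ t.2.1 ∪ t.2.1 \ t.1) ∪ t.2.2

/-- The coefficient attached to an index. -/
def selC (t : Finset ℕ × Finset ℕ × Finset ℕ) : ℝ :=
  (∏ p ∈ t.1 \ t.2.1 ∪ t.2.1 \ t.1, (-((p : ℝ) - 1)⁻¹)) *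
    (∏ p ∈ t.2.2, ((p : ℝ) - 2) * ((p : ℝ) - 1)⁻¹ ^ 2) * wt ((t.1 ∩ t.2.1) \ t.2.2)

/-- The coefficient of the Ramanujan sum `c_q` in the Selberg weight. -/
def selW (P : Finset ℕ) (R q : ℕ) : ℝ :=
  (∑ t ∈ selT P R with ∏ p ∈ selQ t, p = q, selC t) / selG P R

section
variable {P : Finset ℕ} {R : ℕ}

theorem mem_selS {S : Finset ℕ} : S ∈ selS P R ↔ S ⊆ P ∧ ∏ p ∈ S, p ≤ R := by
  simp [selS]

theorem empty_mem_selS (hR : 1 ≤ R) : ∅ ∈ selS P R := mem_selS.2 ⟨empty_subset _, by simpa⟩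

theorem one_lt_of_mem (hP : ∀ p ∈ P, p.Prime) {p : ℕ} (hp : p ∈ P) : (0 : ℝ) < (p : ℝ) - 1 := by
  have : (1 : ℝ) < p := by exact_mod_cast (hP p hp).one_lt
  linarith

theorem wt_nonneg (hP : ∀ p ∈ P, p.Prime) {S : Finset ℕ} (hS : S ⊆ P) : 0 ≤ wt S :=
  Finset.prod_nonneg fun _ hp => (inv_pos.2 (one_lt_of_mem hP (hS hp))).le

theorem one_le_selG (hP : ∀ p ∈ P, p.Prime) (hR : 1 ≤ R) : 1 ≤ selG P R := by
  have := Finset.single_le_sum (f := wt) (fun S hS => wt_nonneg hP (mem_selS.1 hS).1)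
    (empty_mem_selS (P := P) hR)
  rwa [wt, Finset.prod_empty] at this

theorem ram_sq (n : ℤ) {p : ℕ} (hp : p.Prime) :
    ram n p ^ 2 = ((p : ℝ) - 2) * ram n p + ((p : ℝ) - 1) := by
  rw [ram_prime n hp]
  split_ifs <;> ring

theorem prod_mul_prod_eq (hP : ∀ p ∈ P, p.Prime) (n : ℤ) {S S' : Finset ℕ} (hS : S ⊆ P) :
    (∏ p ∈ S, (-((p : ℝ) - 1)⁻¹ * ram n p)) * ∏ p ∈ S', (-((p : ℝ) - 1)⁻¹ * ram n p) =
      ∑ T ∈ (S ∩ S').powerset, selC (S, S', T) * ∏ p ∈ selQ (S, S', T), ram n p := by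
  have h1 : ∀ A B : Finset ℕ, ∏ p ∈ A, (-((p : ℝ) - 1)⁻¹ * ram n p) =
      (∏ p ∈ A \ B, (-((p : ℝ) - 1)⁻¹ * ram n p)) *
        ∏ p ∈ A ∩ B, (-((p : ℝ) - 1)⁻¹ * ram n p) := by
    intro A B
    rw [← Finset.prod_union (Finset.disjoint_sdiff_inter A B), Finset.sdiff_union_inter]
  have hd : Disjoint (S \ S') (S' \ S) :=
    Finset.disjoint_left.2 fun p h h' => (mem_sdiff.1 h').2 (mem_sdiff.1 h).1
  have h2 : (∏ p ∈ S, (-((p : ℝ) - 1)⁻¹ * ram n p)) * ∏ p ∈ S', (-((p : ℝ) - 1)⁻¹ * ram n p) =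
      (∏ p ∈ S \ S' ∪ S' \ S, (-((p : ℝ) - 1)⁻¹ * ram n p)) *
      ∏ p ∈ S ∩ S', (((p : ℝ) - 2) * ((p : ℝ) - 1)⁻¹ ^ 2 * ram n p + ((p : ℝ) - 1)⁻¹) := by
    rw [h1 S S', h1 S' S, Finset.inter_comm S' S, Finset.prod_union hd, mul_mul_mul_comm,
      ← Finset.prod_mul_distrib (s := S ∩ S')]
    congr 1
    refine Finset.prod_congr rfl fun p hp => ?_
    have hpP := hS (mem_inter.1 hp).1
    have h0 := (one_lt_of_mem hP hpP).ne'
    calc _ = ((p : ℝ) - 1)⁻¹ ^ 2 * ram n p ^ 2 := by ring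
      _ = _ := by rw [ram_sq n (hP p hpP)]; field_simp
  rw [h2, Finset.prod_add, Finset.mul_sum]
  refine Finset.sum_congr rfl fun T hT => ?_
  have hdT : Disjoint (S \ S' ∪ S' \ S) T := by
    refine Finset.disjoint_left.2 fun p h h' => ?_
    have := mem_inter.1 (mem_powerset.1 hT h')
    rcases mem_union.1 h with h | h
    · exact (mem_sdiff.1 h).2 this.2
    · exact (mem_sdiff.1 h).2 this.1
  simp only [selC, selQ, wt]
  rw [Finset.prod_union hdT]
  simp only [Finset.prod_mul_distrib]
  ring

theorem selLam_sq (hP : ∀ p ∈ P, p.Prime) (n : ℤ) :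
    selLam P R n ^ 2 = ∑ t ∈ selT P R, selC t * ∏ p ∈ selQ t, ram n p := by
  rw [sq, selLam, Finset.sum_mul_sum, selT, Finset.sum_filter, Finset.sum_product]
  refine Finset.sum_congr rfl fun S hS => ?_
  rw [Finset.sum_product]
  refine Finset.sum_congr rfl fun S' hS' => ?_
  rw [prod_mul_prod_eq hP n (mem_selS.1 hS).1, ← Finset.sum_filter]
  refine Finset.sum_congr ?_ fun _ _ => rfl
  ext T
  simp only [mem_powerset, mem_filter, iff_and_self]
  exact fun h => h.trans (Finset.inter_subset_left.trans (mem_selS.1 hS).1)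

theorem selQ_subset {t : Finset ℕ × Finset ℕ × Finset ℕ} (ht : t ∈ selT P R) :
    selQ t ⊆ t.1 ∪ t.2.1 := by
  have h := (mem_filter.1 ht).2
  exact union_subset (union_subset_union sdiff_subset sdiff_subset)
    (h.trans (inter_subset_left.trans subset_union_left))

theorem selQ_subset_left {t : Finset ℕ × Finset ℕ × Finset ℕ} (ht : t ∈ selT P R) :
    selQ t ⊆ P := by
  have h := mem_product.1 (mem_filter.1 ht).1
  have h' := mem_product.1 h.2
  exact (selQ_subset ht).trans (union_subset (mem_selS.1 h.1).1 (mem_selS.1 h'.1).1)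

theorem prod_selQ_le (hP : ∀ p ∈ P, p.Prime) {t : Finset ℕ × Finset ℕ × Finset ℕ}
    (ht : t ∈ selT P R) : ∏ p ∈ selQ t, p ≤ R ^ 2 := by
  have h := mem_product.1 (mem_filter.1 ht).1
  have h' := mem_product.1 h.2
  obtain ⟨h1, h2⟩ := mem_selS.1 h.1
  obtain ⟨h3, h4⟩ := mem_selS.1 h'.1
  have hone : ∀ p ∈ P, 1 ≤ p := fun p hp => (hP p hp).one_le
  calc ∏ p ∈ selQ t, p ≤ ∏ p ∈ t.1 ∪ t.2.1, p :=
        Finset.prod_le_prod_of_subset_of_one_le' (selQ_subset ht)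
          fun p hp _ => hone p (union_subset h1 h3 hp)
    _ ≤ (∏ p ∈ t.1 ∪ t.2.1, p) * ∏ p ∈ t.1 ∩ t.2.1, p := by
        refine Nat.le_mul_of_pos_right _ (Finset.prod_pos fun p hp => ?_)
        exact hone p (h1 (mem_inter.1 hp).1)
    _ = (∏ p ∈ t.1, p) * ∏ p ∈ t.2.1, p := Finset.prod_union_inter
    _ ≤ R ^ 2 := by rw [sq]; exact Nat.mul_le_mul h2 h4

/-- The expansion of the Selberg weight into Ramanujan sums. -/
theorem sum_selW_mul_ram (hP : ∀ p ∈ P, p.Prime) (n : ℤ) {Z : ℕ} (hZ : R ^ 2 < Z) :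
    ∑ q ∈ Ico 1 Z, selW P R q * ram n q = selLam P R n ^ 2 / selG P R := by
  rw [selLam_sq hP n]
  simp_rw [selW, div_mul_eq_mul_div]
  rw [← Finset.sum_div]
  congr 1
  rw [← Finset.sum_fiberwise_of_maps_to (s := selT P R) (t := Ico 1 Z)
    (g := fun t => ∏ p ∈ selQ t, p)]
  · refine Finset.sum_congr rfl fun q _ => ?_
    rw [Finset.sum_mul]
    refine Finset.sum_congr rfl fun t ht => ?_
    obtain ⟨ht, hq⟩ := mem_filter.1 ht
    rw [← hq, ram_prod_primes n _ fun p hp => hP p (selQ_subset_left ht hp)]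
  · intro t ht
    refine mem_Ico.2 ⟨?_, (prod_selQ_le hP ht).trans_lt hZ⟩
    exact Finset.prod_pos fun p hp => (hP p (selQ_subset_left ht hp)).pos

theorem abs_selC_le (hP : ∀ p ∈ P, p.Prime) {t : Finset ℕ × Finset ℕ × Finset ℕ}
    (ht : t ∈ selT P R) : |selC t| ≤ wt (selQ t) * wt ((t.1 ∩ t.2.1) \ t.2.2) := by
  have hsub := (mem_filter.1 ht).2
  have hQ := selQ_subset_left ht
  have hd : Disjoint (t.1 \ t.2.1 ∪ t.2.1 \ t.1) t.2.2 := by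
    refine Finset.disjoint_left.2 fun p h h' => ?_
    have := mem_inter.1 (hsub h')
    rcases mem_union.1 h with h | h
    · exact (mem_sdiff.1 h).2 this.2
    · exact (mem_sdiff.1 h).2 this.1
  have hH : (t.1 ∩ t.2.1) \ t.2.2 ⊆ P := sdiff_subset.trans (inter_subset_left.trans
    (mem_selS.1 (mem_product.1 (mem_filter.1 ht).1).1).1)
  rw [selC, abs_mul, abs_mul, abs_of_nonneg (wt_nonneg hP hH)]
  refine mul_le_mul_of_nonneg_right ?_ (wt_nonneg hP hH)
  rw [wt, selQ, Finset.prod_union hd, Finset.abs_prod, Finset.abs_prod]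
  refine mul_le_mul (Finset.prod_le_prod (fun _ _ => abs_nonneg _) fun p hp => ?_)
    (Finset.prod_le_prod (fun _ _ => abs_nonneg _) fun p hp => ?_)
    (Finset.prod_nonneg fun _ _ => abs_nonneg _)
    (Finset.prod_nonneg fun p hp => ?_)
  · have := one_lt_of_mem hP (hQ (mem_union_left _ hp))
    rw [abs_neg, abs_of_pos (inv_pos.2 this)]
  · have h1 := one_lt_of_mem hP (hQ (mem_union_right _ hp))
    have h2 : (2 : ℝ) ≤ p := by exact_mod_cast (hP p (hQ (mem_union_right _ hp))).two_le
    rw [abs_of_nonneg (mul_nonneg (by linarith) (by positivity)), sq, ← mul_assoc]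
    refine mul_le_of_le_one_left (by positivity) ?_
    rw [← div_eq_mul_inv, div_le_one h1]
    linarith
  · exact (inv_pos.2 (one_lt_of_mem hP (hQ (mem_union_left _ hp)))).le

theorem index_reconstruct {t : Finset ℕ × Finset ℕ × Finset ℕ} (ht : t ∈ selT P R) :
    ((t.1 ∩ selQ t) ∪ (t.1 ∩ t.2.1) \ t.2.2, (t.2.1 ∩ selQ t) ∪ (t.1 ∩ t.2.1) \ t.2.2,
      (t.1 ∩ selQ t) ∩ (t.2.1 ∩ selQ t)) = t := by
  have hs := (mem_filter.1 ht).2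
  obtain ⟨A, B, T⟩ := t
  simp only [Prod.mk.injEq, selQ] at hs ⊢
  refine ⟨?_, ?_, ?_⟩ <;>
  · ext p
    have := @hs p
    simp only [mem_inter, mem_sdiff, mem_union] at this ⊢
    tauto

theorem card_divisors_prod_primes {S : Finset ℕ} (hS : ∀ p ∈ S, p.Prime) :
    #(∏ p ∈ S, p).divisors = 2 ^ #S := by
  induction S using Finset.induction_on with
  | empty => simp
  | insert p S hp ih =>
    have hpp := hS p (mem_insert_self _ _)
    have hS' : ∀ q ∈ S, q.Prime := fun q hq => hS q (mem_insert_of_mem hq)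
    have hcop : p.Coprime (∏ q ∈ S, q) := Nat.Coprime.prod_right fun q hq =>
      (Nat.coprime_primes hpp (hS' q hq)).2 fun h => hp (h ▸ hq)
    rw [Finset.prod_insert hp, hcop.card_divisors_mul, ih hS', Finset.card_insert_of_notMem hp,
      hpp.divisors, Finset.card_pair hpp.one_lt.ne, pow_succ, mul_comm]

theorem abs_selW_le (hP : ∀ p ∈ P, p.Prime) (hR : 1 ≤ R) {q : ℕ} (hq : selW P R q ≠ 0) :
    |selW P R q| ≤ 4 ^ #q.primeFactors * wt q.primeFactors := by
  have hG : 0 < selG P R := one_pos.trans_le (one_le_selG hP hR)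
  rw [selW, abs_div, abs_of_pos hG, div_le_iff₀ hG]
  obtain ⟨t₀, ht₀, -⟩ := Finset.exists_ne_zero_of_sum_ne_zero
    (fun h => hq (by rw [selW, h, zero_div]))
  obtain ⟨ht₀, hq₀⟩ := mem_filter.1 ht₀
  set Q := q.primeFactors
  have hQ : ∀ t ∈ selT P R, ∏ p ∈ selQ t, p = q → selQ t = Q := by
    intro t ht h
    rw [← Nat.primeFactors_prod fun p hp => hP p (selQ_subset_left ht hp), h]
  have hQP : Q ⊆ P := hQ t₀ ht₀ hq₀ ▸ selQ_subset_left ht₀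
  calc |∑ t ∈ selT P R with ∏ p ∈ selQ t, p = q, selC t|
      ≤ ∑ t ∈ selT P R with ∏ p ∈ selQ t, p = q, wt Q * wt ((t.1 ∩ t.2.1) \ t.2.2) := by
        refine (Finset.abs_sum_le_sum_abs _ _).trans (Finset.sum_le_sum fun t ht => ?_)
        obtain ⟨ht, h⟩ := mem_filter.1 ht
        rw [← hQ t ht h]
        exact abs_selC_le hP ht
    _ ≤ ∑ z ∈ Q.powerset ×ˢ Q.powerset ×ˢ selS P R, wt Q * wt z.2.2 := by
        rw [← Finset.sum_image (g := fun t : Finset ℕ × Finset ℕ × Finset ℕ =>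
          (t.1 ∩ Q, t.2.1 ∩ Q, (t.1 ∩ t.2.1) \ t.2.2)) (f := fun z => wt Q * wt z.2.2)]
        · refine Finset.sum_le_sum_of_subset_of_nonneg ?_ fun z hz _ => ?_
          · rintro z hz
            obtain ⟨t, ht, rfl⟩ := mem_image.1 hz
            obtain ⟨ht, h⟩ := mem_filter.1 ht
            have h1 := mem_selS.1 (mem_product.1 (mem_filter.1 ht).1).1
            have hsub : (t.1 ∩ t.2.1) \ t.2.2 ⊆ t.1 := sdiff_subset.trans inter_subset_left
            simp only [mem_product, mem_powerset, inter_subset_right, true_and]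
            refine mem_selS.2 ⟨hsub.trans h1.1, le_trans ?_ h1.2⟩
            exact Finset.prod_le_prod_of_subset_of_one_le' hsub
              fun p hp _ => (hP p (h1.1 hp)).one_le
          · simp only [mem_product] at hz
            exact mul_nonneg (wt_nonneg hP hQP) (wt_nonneg hP (mem_selS.1 hz.2.2).1)
        · intro t ht t' ht' h
          obtain ⟨ht, hqt⟩ := mem_filter.1 ht
          obtain ⟨ht', hqt'⟩ := mem_filter.1 ht'
          rw [← index_reconstruct ht, ← index_reconstruct ht', hQ t ht hqt, hQ t' ht' hqt']
          simp only [Prod.mk.injEq] at h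
          rw [h.1, h.2.1, h.2.2]
    _ = 4 ^ #Q * wt Q * selG P R := by
        simp only [Finset.sum_product, Finset.sum_const, card_powerset, nsmul_eq_mul, selG,
          Finset.mul_sum]
        refine Finset.sum_congr rfl fun S _ => ?_
        rw [show (4 : ℝ) = 2 * 2 by norm_num, mul_pow]
        push_cast
        ring

theorem exists_of_selW_ne_zero (hP : ∀ p ∈ P, p.Prime) {q : ℕ} (hq : selW P R q ≠ 0) :
    ∃ Q ⊆ P, q = ∏ p ∈ Q, p ∧ q ≤ R ^ 2 := by
  obtain ⟨t, ht, -⟩ := Finset.exists_ne_zero_of_sum_ne_zero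
    (fun h => hq (by rw [selW, h, zero_div]))
  obtain ⟨ht, h⟩ := mem_filter.1 ht
  exact ⟨selQ t, selQ_subset_left ht, h.symm, h ▸ prod_selQ_le hP ht⟩

theorem abs_selW_mul_card_divisors_le (hP : ∀ p ∈ P, p.Prime) (hR : 1 ≤ R) (q : ℕ) :
    |selW P R q| * #q.divisors ≤ kap q := by
  by_cases h0 : selW P R q = 0
  · rw [h0, abs_zero, zero_mul]; exact kap_nonneg q
  obtain ⟨Q, hQP, rfl, -⟩ := exists_of_selW_ne_zero hP h0
  have hQ : ∀ p ∈ Q, p.Prime := fun p hp => hP p (hQP hp)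
  have h := abs_selW_le hP hR h0
  have hτ := card_divisors_prod_primes hQ
  rw [Nat.primeFactors_prod hQ] at h
  rw [kap, Nat.primeFactors_prod hQ, hτ]
  calc _ ≤ 4 ^ #Q * wt Q * (2 ^ #Q : ℕ) := by gcongr
    _ ≤ 4 ^ #Q * (2 ^ #Q * (∏ p ∈ Q, (p : ℝ))⁻¹) * (2 ^ #Q : ℕ) := by
        gcongr
        rw [wt, ← Finset.prod_const, ← Finset.prod_inv_distrib, ← Finset.prod_mul_distrib]
        refine Finset.prod_le_prod (fun p hp => (inv_pos.2 (one_lt_of_mem hP (hQP hp))).le)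
          fun p hp => ?_
        have h2 : (2 : ℝ) ≤ p := by exact_mod_cast (hQ p hp).two_le
        rw [← div_eq_mul_inv, inv_eq_one_div, div_le_div_iff₀ (by linarith) (by linarith)]
        linarith
    _ = _ := by
        rw [show (16 : ℝ) = 4 * 2 * 2 by norm_num, mul_pow, mul_pow]
        push_cast
        ring

theorem selLam_eq_selG (hP : ∀ p ∈ P, p.Prime) {n : ℤ} (hn : ∀ p ∈ P, ¬ (p : ℤ) ∣ n) :
    selLam P R n = selG P R := by
  refine Finset.sum_congr rfl fun S hS => Finset.prod_congr rfl fun p hp => ?_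
  have hp' := (mem_selS.1 hS).1 hp
  rw [ram_prime n (hP p hp'), if_neg (hn p hp')]
  ring

end

/-- The primes up to `R` that do not divide `y`. -/
def selP (y R : ℕ) : Finset ℕ := {p ∈ range (R + 1) | p.Prime ∧ ¬ p ∣ y}

theorem mem_selP {y R p : ℕ} : p ∈ selP y R ↔ p ≤ R ∧ p.Prime ∧ ¬ p ∣ y := by
  simp [selP]

theorem sum_inv_le_prod_of_mem_factoredNumbers {T : Finset ℕ} (hT : ∀ p ∈ T, p.Prime)
    {A : Finset ℕ} (hA : ∀ n ∈ A, n ∈ Nat.factoredNumbers T) :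
    ∑ n ∈ A, (n : ℝ)⁻¹ ≤ ∏ p ∈ T, (1 - (p : ℝ)⁻¹)⁻¹ := by
  let f : ℕ →* ℝ := (invMonoidHom : ℝ →* ℝ).comp (Nat.castRingHom ℝ : ℕ →* ℝ)
  have hf : ∀ n, f n = (n : ℝ)⁻¹ := fun n => rfl
  have h := EulerProduct.summable_and_hasSum_factoredNumbers_prod_filter_prime_geometric (f := f)
    (fun {p} hp => by
      rw [hf, norm_inv, Real.norm_natCast]
      exact inv_lt_one_of_one_lt₀ (by exact_mod_cast hp.one_lt)) T
  rw [Finset.filter_true_of_mem hT] at h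
  have h2 : ∑ n ∈ A, (n : ℝ)⁻¹ = ∑ n ∈ A.subtype (· ∈ Nat.factoredNumbers T), f n :=
    (Finset.sum_subtype_of_mem (fun n : ℕ => (n : ℝ)⁻¹) hA).symm
  rw [h2]
  exact sum_le_hasSum _ (fun n _ => by rw [hf]; positivity) h.2

theorem prod_one_sub_inv_eq {y : ℕ} (hy : 0 < y) :
    ∏ p ∈ y.primeFactors, (1 - (p : ℝ)⁻¹)⁻¹ = y / y.totient := by
  have h := congrArg (fun z : ℚ => (z : ℝ)) (Nat.totient_eq_mul_prod_factors y)
  push_cast at h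
  have hy' : (y : ℝ) ≠ 0 := by exact_mod_cast hy.ne'
  have hφ : (y.totient : ℝ) ≠ 0 := by exact_mod_cast (Nat.totient_pos.2 hy).ne'
  have h0 : ∏ p ∈ y.primeFactors, (1 - (p : ℝ)⁻¹) ≠ 0 := fun h0 => hφ (by rw [h, h0, mul_zero])
  rw [Finset.prod_inv_distrib, h]
  field_simp

theorem sum_inv_fiber_le {y : ℕ} (hy : 0 < y) {S : Finset ℕ} (hS : ∀ p ∈ S, p.Prime ∧ ¬ p ∣ y)
    {A : Finset ℕ} (hA : ∀ n ∈ A, n ≠ 0 ∧ {p ∈ n.primeFactors | ¬ p ∣ y} = S) :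
    ∑ n ∈ A, (n : ℝ)⁻¹ ≤ wt S * (y / y.totient) := by
  have hdvd : ∀ n ∈ A, ∏ p ∈ S, p ∣ n := by
    intro n hn
    rw [← (hA n hn).2]
    exact (Finset.prod_dvd_prod_of_subset _ _ _ (filter_subset _ _)).trans
      (Nat.prod_primeFactors_dvd n)
  have hpos : 0 < ∏ p ∈ S, p := Finset.prod_pos fun p hp => (hS p hp).1.pos
  have hT : ∀ p ∈ S ∪ y.primeFactors, p.Prime := by
    intro p hp
    rcases mem_union.1 hp with h | h
    · exact (hS p h).1
    · exact Nat.prime_of_mem_primeFactors h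
  have hd : Disjoint S y.primeFactors := Finset.disjoint_left.2 fun p hp hp' =>
    (hS p hp).2 (Nat.dvd_of_mem_primeFactors hp')
  have hinj : Set.InjOn (fun n => n / ∏ p ∈ S, p) A := by
    intro n hn m hm h
    exact Nat.div_left_inj (hdvd n hn) (hdvd m hm) |>.1 h
  have h1 : ∑ n ∈ A, (n : ℝ)⁻¹ =
      ((∏ p ∈ S, p : ℕ) : ℝ)⁻¹ * ∑ m ∈ A.image fun n => n / ∏ p ∈ S, p, (m : ℝ)⁻¹ := by
    rw [Finset.sum_image hinj, Finset.mul_sum]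
    refine Finset.sum_congr rfl fun n hn => ?_
    rw [← mul_inv, ← Nat.cast_mul, Nat.mul_div_cancel' (hdvd n hn)]
  have h2 := sum_inv_le_prod_of_mem_factoredNumbers hT
    (A := A.image fun n => n / ∏ p ∈ S, p) (by
      intro m hm
      obtain ⟨n, hn, rfl⟩ := mem_image.1 hm
      have hle := Nat.le_of_dvd (Nat.pos_of_ne_zero (hA n hn).1) (hdvd n hn)
      rw [Nat.mem_factoredNumbers_iff_primeFactors_subset]
      refine ⟨(Nat.div_pos hle hpos).ne', fun p hp => ?_⟩
      have hp' := Nat.primeFactors_mono (Nat.div_dvd_of_dvd (hdvd n hn)) (hA n hn).1 hp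
      rw [mem_union]
      by_cases hpy : p ∣ y
      · exact .inr (Nat.mem_primeFactors.2 ⟨Nat.prime_of_mem_primeFactors hp, hpy, hy.ne'⟩)
      · exact .inl ((hA n hn).2 ▸ mem_filter.2 ⟨hp', hpy⟩))
  rw [h1]
  calc _ ≤ ((∏ p ∈ S, p : ℕ) : ℝ)⁻¹ * ∏ p ∈ S ∪ y.primeFactors, (1 - (p : ℝ)⁻¹)⁻¹ := by gcongr
    _ = _ := by
      rw [Finset.prod_union hd, prod_one_sub_inv_eq hy, ← mul_assoc, Nat.cast_prod,
        ← Finset.prod_inv_distrib, ← Finset.prod_mul_distrib, wt]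
      congr 1
      refine Finset.prod_congr rfl fun p hp => ?_
      have h0 : (p : ℝ) ≠ 0 := by exact_mod_cast (hS p hp).1.ne_zero
      rw [← mul_inv, mul_sub, mul_one, mul_inv_cancel₀ h0]

theorem log_le_selG {y : ℕ} (hy : 0 < y) (R : ℕ) :
    (y.totient / y : ℝ) * Real.log R ≤ selG (selP y R) R := by
  have hφ : (0 : ℝ) < y.totient := by exact_mod_cast Nat.totient_pos.2 hy
  have hy' : (0 : ℝ) < y := by exact_mod_cast hy
  have hmaps : ∀ n ∈ Icc 1 R, {p ∈ n.primeFactors | ¬ p ∣ y} ∈ selS (selP y R) R := by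
    intro n hn
    rw [mem_Icc] at hn
    refine mem_selS.2 ⟨fun p hp => ?_, ?_⟩
    · obtain ⟨h1, h2⟩ := mem_filter.1 hp
      exact mem_selP.2 ⟨(Nat.le_of_mem_primeFactors h1).trans hn.2,
        Nat.prime_of_mem_primeFactors h1, h2⟩
    · refine le_trans (Nat.le_of_dvd hn.1 ?_) hn.2
      exact (Finset.prod_dvd_prod_of_subset _ _ _ (filter_subset _ _)).trans
        (Nat.prod_primeFactors_dvd n)
  have h1 : Real.log R ≤ ∑ n ∈ Icc 1 R, (n : ℝ)⁻¹ := by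
    have h := log_add_one_le_harmonic R
    rw [harmonic_eq_sum_Icc] at h
    push_cast at h
    rcases R.eq_zero_or_pos with rfl | hR
    · simp
    · exact (Real.log_le_log (by exact_mod_cast hR) (by linarith)).trans h
  have h2 : ∑ n ∈ Icc 1 R, (n : ℝ)⁻¹ ≤ selG (selP y R) R * (y / y.totient) := by
    rw [← Finset.sum_fiberwise_of_maps_to hmaps, selG, Finset.sum_mul]
    refine Finset.sum_le_sum fun S hS => sum_inv_fiber_le hy (fun p hp => ?_) fun n hn => ?_
    · exact (mem_selP.1 ((mem_selS.1 hS).1 hp)).2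
    · obtain ⟨h1, h2⟩ := mem_filter.1 hn
      exact ⟨(Nat.one_le_iff_ne_zero.1 (mem_Icc.1 h1).1), h2⟩
  calc _ ≤ (y.totient / y : ℝ) * (selG (selP y R) R * (y / y.totient)) := by
        gcongr; exact h1.trans h2
    _ = _ := by field_simp

/-- The integers below `2 ^ (17 * k)` that are not primes exceeding `2 ^ k`. -/
def excSet (k : ℕ) : Finset ℕ := {n ∈ range (2 ^ (17 * k)) | ¬ n.Prime ∨ n ≤ 2 ^ k}

theorem log_two_pow_le (m : ℕ) : Real.log ((2 : ℝ) ^ m) ≤ m := by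
  rw [Real.log_pow]
  have := Real.log_two_lt_d9
  nlinarith [(Nat.cast_nonneg m : (0 : ℝ) ≤ m)]

theorem sum_excSet_vonMangoldt_le (k : ℕ) :
    ∑ n ∈ excSet k, ArithmeticFunction.vonMangoldt n ≤ 36 * (2 : ℝ) ^ (10 * k) := by
  have hΛ : ∀ n : ℕ, (0 : ℝ) ≤ ArithmeticFunction.vonMangoldt n :=
    fun n => ArithmeticFunction.vonMangoldt_nonneg
  set X : ℝ := (2 : ℝ) ^ (17 * k) with hX
  have hX1 : 1 ≤ X := one_le_pow₀ (by norm_num)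
  have hfl : ⌊X⌋₊ = 2 ^ (17 * k) := by
    rw [hX]; exact_mod_cast Nat.floor_natCast (R := ℝ) (2 ^ (17 * k))
  have hsub : excSet k ⊆ {n ∈ Ioc 0 ⌊X⌋₊ | ¬ n.Prime} ∪ range (2 ^ k + 1) := by
    intro n hn
    simp only [excSet, mem_filter, mem_range] at hn
    simp only [mem_union, mem_filter, mem_Ioc, mem_range, hfl]
    by_cases h : n ≤ 2 ^ k
    · right; lia
    · left
      exact ⟨⟨by lia, hn.1.le⟩, hn.2.resolve_right h⟩
  have hk : (k : ℝ) ≤ 2 ^ k := by exact_mod_cast Nat.lt_two_pow_self.le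
  have hpow : (1 : ℝ) ≤ 2 ^ k := one_le_pow₀ (by norm_num)
  have h1 : ∑ n ∈ Ioc 0 ⌊X⌋₊ with ¬ n.Prime, ArithmeticFunction.vonMangoldt n ≤
      34 * (2 : ℝ) ^ (10 * k) := by
    rw [← Chebyshev.psi_sub_theta_eq_sum_not_prime]
    refine (Chebyshev.psi_sub_theta_le hX1).trans ?_
    have hs : √X ≤ 2 ^ (9 * k) := by
      rw [Real.sqrt_le_left (by positivity), hX, ← pow_mul]
      exact pow_le_pow_right₀ (by norm_num) (by lia)
    have hl : Real.log X ≤ 17 * 2 ^ k := by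
      refine (log_two_pow_le _).trans ?_
      push_cast
      gcongr
    have hl0 : 0 ≤ Real.log X := Real.log_nonneg hX1
    calc 2 * √X * Real.log X ≤ 2 * 2 ^ (9 * k) * (17 * 2 ^ k) := by gcongr
      _ = 34 * (2 : ℝ) ^ (10 * k) := by
        rw [show 10 * k = 9 * k + k by ring, pow_add]; ring
  have h2 : ∑ n ∈ range (2 ^ k + 1), ArithmeticFunction.vonMangoldt n ≤
      2 * (2 : ℝ) ^ (10 * k) := by
    have : ∀ n ∈ range (2 ^ k + 1), ArithmeticFunction.vonMangoldt n ≤ (2 : ℝ) ^ k := by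
      intro n hn
      rcases Nat.eq_zero_or_pos n with rfl | hn0
      · simp
      refine ArithmeticFunction.vonMangoldt_le_log.trans ?_
      have hn1 : (n : ℝ) ≤ 2 ^ k := by
        have := mem_range.1 hn
        exact_mod_cast (by lia : n ≤ 2 ^ k)
      refine (Real.log_le_log (by exact_mod_cast hn0) hn1).trans ((log_two_pow_le k).trans hk)
    refine (Finset.sum_le_card_nsmul _ _ _ this).trans ?_
    rw [card_range, nsmul_eq_mul]
    push_cast
    calc ((2 : ℝ) ^ k + 1) * 2 ^ k ≤ (2 ^ k + 2 ^ k) * 2 ^ k := by gcongr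
      _ = 2 * 2 ^ (2 * k) := by rw [two_mul k, pow_add]; ring
      _ ≤ 2 * 2 ^ (10 * k) := by
        have : (2 : ℝ) ^ (2 * k) ≤ 2 ^ (10 * k) := pow_le_pow_right₀ (by norm_num) (by lia)
        linarith
  calc _ ≤ ∑ n ∈ {n ∈ Ioc 0 ⌊X⌋₊ | ¬ n.Prime} ∪ range (2 ^ k + 1),
        ArithmeticFunction.vonMangoldt n :=
        Finset.sum_le_sum_of_subset_of_nonneg hsub fun _ _ _ => hΛ _
    _ ≤ _ := by
        have := Finset.sum_union_inter (s₁ := {n ∈ Ioc 0 ⌊X⌋₊ | ¬ n.Prime})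
          (s₂ := range (2 ^ k + 1)) (f := fun n => (ArithmeticFunction.vonMangoldt n : ℝ))
        have h3 : 0 ≤ ∑ n ∈ {n ∈ Ioc 0 ⌊X⌋₊ | ¬ n.Prime} ∩ range (2 ^ k + 1),
          (ArithmeticFunction.vonMangoldt n : ℝ) := Finset.sum_nonneg fun _ _ => hΛ _
        linarith

/-- The convolution of `g` with the von Mangoldt function restricted to `excSet k`. -/
def excConv (k : ℕ) (g : ℤ → ℝ≥0) (x : ℤ) : ℝ≥0 :=
  ∑ n ∈ excSet k, (ArithmeticFunction.vonMangoldt n).toNNReal * g (x - n)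

theorem coe_excConv (k : ℕ) (g : ℤ → ℝ≥0) (x : ℤ) :
    (excConv k g x : ℝ) = ∑ n ∈ excSet k, ArithmeticFunction.vonMangoldt n * (g (x - n) : ℝ) := by
  simp [excConv, ArithmeticFunction.vonMangoldt_nonneg]

theorem nrm_excConv_le {r : ℝ} (hr : 1 ≤ r) (k : ℕ) (g : ℤ → ℝ≥0) :
    nrm r (excConv k g) ≤ ((36 * 2 ^ (10 * k) : ℝ≥0) : ℝ≥0∞) * nrm r g := by
  have hr0 : 0 < r := zero_lt_one.trans_le hr
  refine (nrm_sum_le hr _ _).trans ?_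
  simp_rw [nrm_const_mul hr0, nrm_comp_sub]
  rw [← Finset.sum_mul, ← ENNReal.ofNNReal_finsetSum]
  gcongr
  rw [← NNReal.coe_le_coe]
  push_cast
  simpa [ArithmeticFunction.vonMangoldt_nonneg] using sum_excSet_vonMangoldt_le k

/-- The Selberg weights at the scale `2 ^ k`, sifting by the primes not dividing `y`. -/
def sieveW (y k : ℕ) : ℕ → ℝ := selW (selP y (2 ^ k)) (2 ^ k)

theorem prime_of_mem_selP {y R p : ℕ} (h : p ∈ selP y R) : p.Prime := (mem_selP.1 h).2.1

theorem adm_sieveW (y : ℕ) : Adm (sieveW y) := by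
  intro k q
  refine ⟨abs_selW_mul_card_divisors_le (fun _ => prime_of_mem_selP) Nat.one_le_two_pow q,
    fun h => ?_⟩
  obtain ⟨_, _, _, h⟩ := exists_of_selW_ne_zero (fun _ => prime_of_mem_selP) h
  rwa [← pow_mul, mul_comm, pow_mul] at h

theorem blockKer_sieveW {y k K : ℕ} (hk : k < K) (β n : ℤ) :
    blockKer (sieveW y k) β (Ico 1 (4 ^ K)) n =
      selLam (selP y (2 ^ k)) (2 ^ k) (n + β) ^ 2 / selG (selP y (2 ^ k)) (2 ^ k) := by
  refine sum_selW_mul_ram (fun _ => prime_of_mem_selP) _ ?_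
  rw [← pow_mul, mul_comm, pow_mul]
  exact Nat.pow_lt_pow_right (by norm_num) hk

theorem blockKer_sieveW_nonneg {y k K : ℕ} (hk : k < K) (β n : ℤ) :
    0 ≤ blockKer (sieveW y k) β (Ico 1 (4 ^ K)) n := by
  rw [blockKer_sieveW hk]
  have := one_le_selG (P := selP y (2 ^ k)) (fun _ => prime_of_mem_selP)
    (Nat.one_le_two_pow (n := k))
  positivity

theorem le_blockKer_sieveW {y k K : ℕ} (hy : 0 < y) (hk : k < K) {β n : ℤ}
    (h : ∀ p ∈ selP y (2 ^ k), ¬ (p : ℤ) ∣ n + β) :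
    (y.totient / y : ℝ) * (k * Real.log 2) ≤ blockKer (sieveW y k) β (Ico 1 (4 ^ K)) n := by
  have h1 := one_le_selG (P := selP y (2 ^ k)) (fun _ => prime_of_mem_selP)
    (Nat.one_le_two_pow (n := k))
  rw [blockKer_sieveW hk, selLam_eq_selG (fun _ => prime_of_mem_selP) h, sq,
    mul_div_cancel_right₀ _ (by positivity)]
  have := log_le_selG hy (2 ^ k)
  push_cast at this
  rwa [Real.log_pow] at this

/-- A shift that turns divisibility along the progression `c + y ℤ` into divisibility of
consecutive integers, for all small primes not dividing `y`. -/
theorem exists_shift (y : ℕ) (c : ℤ) (K : ℕ) :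
    ∃ β : ℤ, ∀ p ∈ selP y (2 ^ K), ∀ m : ℤ, (p : ℤ) ∣ m + β → (p : ℤ) ∣ c + y * m := by
  have hco : IsCoprime (y : ℤ) ((∏ p ∈ selP y (2 ^ K), p : ℕ) : ℤ) := by
    rw [Nat.isCoprime_iff_coprime]
    refine Nat.Coprime.prod_right fun p hp => ?_
    exact (((mem_selP.1 hp).2.1.coprime_iff_not_dvd).2 (mem_selP.1 hp).2.2).symm
  obtain ⟨u, v, huv⟩ := hco
  refine ⟨u * c, fun p hp m hm => ?_⟩
  have hD : (p : ℤ) ∣ ((∏ p ∈ selP y (2 ^ K), p : ℕ) : ℤ) :=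
    Int.natCast_dvd_natCast.2 (Finset.dvd_prod_of_mem _ hp)
  have : c + y * m = y * (m + u * c) + c * v * ((∏ p ∈ selP y (2 ^ K), p : ℕ) : ℤ) := by
    linear_combination -c * huv
  rw [this]
  exact dvd_add (hm.mul_left _) (hD.mul_left _)

/-- The average of a nonnegative function along the primes in the progression `c` modulo `y`. -/
def posAvg (N y : ℕ) (c : ℤ) (g : ℤ → ℝ≥0) (x : ℤ) : ℝ :=
  (y.totient / N : ℝ) * ∑ n ∈ (range N).filter (fun n : ℕ => (n : ℤ) % y = c),
    ArithmeticFunction.vonMangoldt n * (g (x - n) : ℝ)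

theorem posAvg_nonneg (N y : ℕ) (c : ℤ) (g : ℤ → ℝ≥0) (x : ℤ) : 0 ≤ posAvg N y c g x :=
  mul_nonneg (by positivity) (Finset.sum_nonneg fun _ _ =>
    mul_nonneg ArithmeticFunction.vonMangoldt_nonneg (by positivity))

theorem posAvg_le {y k K N : ℕ} (hy : 0 < y) (hk : k < K) (hk1 : 1 ≤ k) (hyk : y ≤ 2 ^ k)
    (hN : N ≤ y * 2 ^ (16 * k)) (hN' : y * 2 ^ (16 * (k - 1)) < N) {c β : ℤ}
    (hβ : ∀ p ∈ selP y (2 ^ K), ∀ m : ℤ, (p : ℤ) ∣ m + β → (p : ℤ) ∣ c + y * m)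
    (g : ℤ → ℝ≥0) (a z : ℤ) :
    posAvg N y c g (a + y * z) ≤
      17 * 2 ^ 16 * blockConv (sieveW y k) β (Ico 1 (4 ^ K)) (2 ^ (16 * k))
        (fun z => g (a - c + y * z)) z +
      2 ^ 16 / 2 ^ (16 * k) * (excConv k g (a + y * z) : ℝ) := by
  have hΛ : ∀ n : ℕ, (0 : ℝ) ≤ ArithmeticFunction.vonMangoldt n :=
    fun n => ArithmeticFunction.vonMangoldt_nonneg
  have hy' : (0 : ℝ) < y := by exact_mod_cast hy
  have hNpos : 0 < N := by lia
  have hN0 : (0 : ℝ) < N := by exact_mod_cast hNpos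
  have hyN : (y : ℝ) / N ≤ 2 ^ 16 / 2 ^ (16 * k) := by
    rw [div_le_div_iff₀ hN0 (by positivity)]
    have h1 : (y : ℝ) * 2 ^ (16 * (k - 1)) ≤ N := by exact_mod_cast hN'.le
    have h2 : (2 : ℝ) ^ (16 * k) = 2 ^ (16 * (k - 1)) * 2 ^ 16 := by
      rw [← pow_add]; congr 1; lia
    rw [h2]
    nlinarith
  have hφN : (y.totient : ℝ) / N ≤ 2 ^ 16 / 2 ^ (16 * k) := by
    refine le_trans ?_ hyN
    gcongr
    exact Nat.totient_le y
  have hN17 : N ≤ 2 ^ (17 * k) := by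
    calc N ≤ 2 ^ k * 2 ^ (16 * k) := hN.trans (Nat.mul_le_mul_right _ hyk)
      _ = 2 ^ (17 * k) := by rw [← pow_add]; congr 1; ring
  set x : ℤ := a + y * z with hx
  set s : Finset ℕ := (range N).filter (fun n : ℕ => (n : ℤ) % y = c) with hs
  rw [posAvg, ← hs, ← Finset.sum_filter_add_sum_filter_not s
    (fun n => ¬ n.Prime ∨ n ≤ 2 ^ k), mul_add, add_comm]
  refine add_le_add ?_ ?_
  · rw [blockConv, Finset.mul_sum, mul_div_assoc', Finset.mul_sum, Finset.sum_div]
    set t : Finset ℕ := {n ∈ s | ¬ (¬ n.Prime ∨ n ≤ 2 ^ k)} with ht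
    have ht' : ∀ n ∈ t, n < N ∧ (n : ℤ) = c + y * ((n / y : ℕ) : ℤ) ∧ n.Prime ∧ 2 ^ k < n := by
      intro n hn
      simp only [ht, hs, mem_filter, mem_range] at hn
      push Not at hn
      refine ⟨hn.1.1, ?_, hn.2.1, hn.2.2⟩
      rw [← hn.1.2]
      push_cast
      exact (Int.emod_add_mul_ediv _ _).symm
    have hinj : Set.InjOn (fun n => n / y) (t : Set ℕ) := by
      intro n hn n' hn' h
      have h1 := (ht' n hn).2.1
      have h2 := (ht' n' hn').2.1
      simp only at h
      rw [h] at h1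
      exact_mod_cast h1.trans h2.symm
    have himg : t.image (fun n => n / y) ⊆ range (2 ^ (16 * k)) := by
      intro m hm
      obtain ⟨n, hn, rfl⟩ := mem_image.1 hm
      rw [mem_range]
      exact Nat.div_lt_of_lt_mul ((ht' n hn).1.trans_le hN)
    refine le_trans ?_ (Finset.sum_le_sum_of_subset_of_nonneg himg fun m _ _ => ?_)
    · rw [Finset.sum_image hinj]
      refine Finset.sum_le_sum fun n hn => ?_
      obtain ⟨hnN, hnc, hnp, hnk⟩ := ht' n hn
      have hker : (y.totient / y : ℝ) * (k * Real.log 2) ≤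
          blockKer (sieveW y k) β (Ico 1 (4 ^ K)) ((n / y : ℕ) : ℤ) := by
        refine le_blockKer_sieveW hy hk fun p hp hdvd => ?_
        have hp' := mem_selP.1 hp
        have hpK : p ∈ selP y (2 ^ K) :=
          mem_selP.2 ⟨hp'.1.trans (Nat.pow_le_pow_right (by norm_num) hk.le), hp'.2⟩
        have := hβ p hpK _ hdvd
        rw [← hnc, Int.natCast_dvd_natCast, Nat.prime_dvd_prime_iff_eq hp'.2.1 hnp] at this
        lia
      have hlog : ArithmeticFunction.vonMangoldt n ≤ 17 * (k * Real.log 2) := by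
        refine ArithmeticFunction.vonMangoldt_le_log.trans ?_
        have h1 : (n : ℝ) ≤ 2 ^ (17 * k) := by exact_mod_cast hnN.le.trans hN17
        refine (Real.log_le_log (by exact_mod_cast hnp.pos) h1).trans_eq ?_
        rw [Real.log_pow]; push_cast; ring
      have hg : g (a - c + y * (z - ((n / y : ℕ) : ℤ))) = g (x - n) := by
        congr 1
        rw [hx, hnc]
        push_cast
        ring
      have hl0 : 0 ≤ (k : ℝ) * Real.log 2 := by positivity
      simp only [hg]
      calc (y.totient / N : ℝ) * (ArithmeticFunction.vonMangoldt n * (g (x - n) : ℝ))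
          ≤ (y.totient / N : ℝ) * (17 * (k * Real.log 2) * (g (x - n) : ℝ)) := by gcongr
        _ = 17 * ((y : ℝ) / N) * (((y.totient : ℝ) / y) * (k * Real.log 2)) * g (x - n) := by
          field_simp
        _ ≤ 17 * (2 ^ 16 / 2 ^ (16 * k)) *
            blockKer (sieveW y k) β (Ico 1 (4 ^ K)) ((n / y : ℕ) : ℤ) * g (x - n) := by gcongr
        _ = _ := by push_cast; ring
    · have := blockKer_sieveW_nonneg (y := y) hk β (m : ℤ)
      positivity
  · rw [coe_excConv]
    refine mul_le_mul hφN ?_ (Finset.sum_nonneg fun n _ => mul_nonneg (hΛ n) (by positivity))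
      (by positivity)
    refine Finset.sum_le_sum_of_subset_of_nonneg ?_ fun n _ _ => mul_nonneg (hΛ n) (by positivity)
    intro n hn
    simp only [hs, mem_filter, mem_range] at hn
    simp only [excSet, mem_filter, mem_range]
    exact ⟨hn.1.1.trans_le hN17, hn.2⟩

theorem exists_scale {y k₀ N : ℕ} (hy : 0 < y) (hN : y * 2 ^ (16 * k₀) < N) :
    ∃ k, k₀ < k ∧ k ≤ N ∧ N ≤ y * 2 ^ (16 * k) ∧ y * 2 ^ (16 * (k - 1)) < N := by
  classical
  have hex : ∃ k, N ≤ y * 2 ^ (16 * k) := by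
    refine ⟨N, ?_⟩
    calc N ≤ 2 ^ N := Nat.lt_two_pow_self.le
      _ ≤ 2 ^ (16 * N) := Nat.pow_le_pow_right (by norm_num) (by lia)
      _ ≤ y * 2 ^ (16 * N) := Nat.le_mul_of_pos_left _ hy
  have h0 : k₀ < Nat.find hex := by
    by_contra! h
    have := Nat.find_spec hex
    have h2 : y * 2 ^ (16 * Nat.find hex) ≤ y * 2 ^ (16 * k₀) :=
      Nat.mul_le_mul_left _ (Nat.pow_le_pow_right (by norm_num) (by lia))
    lia
  refine ⟨Nat.find hex, h0, Nat.find_min' hex ?_, Nat.find_spec hex, ?_⟩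
  · calc N ≤ 2 ^ N := Nat.lt_two_pow_self.le
      _ ≤ 2 ^ (16 * N) := Nat.pow_le_pow_right (by norm_num) (by lia)
      _ ≤ y * 2 ^ (16 * N) := Nat.le_mul_of_pos_left _ hy
  · have := Nat.find_min hex (m := Nat.find hex - 1) (by lia)
    lia

/-- An `ℓ^p` estimate on every residue class modulo `y` gives the estimate on `ℤ`. -/
theorem nrm_le_of_residues {r : ℝ} (hr : 0 < r) {y : ℕ} (hy : 0 < y) {C : ℝ≥0}
    (u v : ℤ → ℝ≥0)
    (h : ∀ a : ℤ, 0 ≤ a → a < y →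
      nrm r (fun z => u (a + y * z)) ≤ C * nrm r (fun z => v (a + y * z))) :
    nrm r u ≤ C * nrm r v := by
  have : NeZero y := ⟨hy.ne'⟩
  have key : ∀ w : ℤ → ℝ≥0, nrm r w ^ r =
      ∑' i : Fin y, nrm r (fun z => w ((i : ℤ) + y * z)) ^ r := by
    intro w
    rw [nrm_rpow hr, ← ((Equiv.prodComm _ _).trans (Int.divModEquiv y).symm).tsum_eq,
      ENNReal.tsum_prod']
    refine tsum_congr fun i => ?_
    rw [nrm_rpow hr]
    refine tsum_congr fun z => ?_
    simp [Int.divModEquiv, mul_comm, add_comm]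
  have : nrm r u ^ r ≤ (C * nrm r v) ^ r := by
    rw [ENNReal.mul_rpow_of_nonneg _ _ hr.le, key u, key v, ← ENNReal.tsum_mul_left]
    refine ENNReal.tsum_le_tsum fun i => ?_
    rw [← ENNReal.mul_rpow_of_nonneg _ _ hr.le]
    exact ENNReal.rpow_le_rpow (h i (by lia) (by exact_mod_cast i.2)) hr.le
  exact (ENNReal.rpow_le_rpow_iff hr).1 this

theorem sum_excConv_coeff_le (K : ℕ) :
    ∑ k ∈ range K, (2 ^ 16 / 2 ^ (16 * k) * (36 * 2 ^ (10 * k)) : ℝ≥0) ≤ 2 ^ 16 * 72 := by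
  rw [← NNReal.coe_le_coe]
  push_cast
  have h : ∀ k ∈ range K, (2 ^ 16 / 2 ^ (16 * k) * (36 * 2 ^ (10 * k)) : ℝ) ≤
      2 ^ 16 * 36 * (1 / 2) ^ k := by
    intro k _
    have h1 : (2 : ℝ) ^ (16 * k) = 2 ^ (10 * k) * (2 ^ (5 * k) * 2 ^ k) := by
      rw [← pow_add, ← pow_add]; congr 1; ring
    have h2 : (1 : ℝ) ≤ 2 ^ (5 * k) := one_le_pow₀ (by norm_num)
    rw [one_div, inv_pow, ← div_eq_mul_inv, h1, div_mul_eq_mul_div,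
      div_le_div_iff₀ (by positivity) (by positivity)]
    have h3 : (0 : ℝ) < 2 ^ (10 * k) * 2 ^ k := by positivity
    nlinarith
  refine (Finset.sum_le_sum h).trans ?_
  rw [← Finset.mul_sum]
  have := sum_geometric_two_le K
  linarith

theorem exists_nrm_sup_posAvg_le {r : ℝ} (hr : 1 < r) :
    ∃ C : ℝ≥0, ∀ y : ℕ, 0 < y → ∃ N₀ : ℕ, 0 < N₀ ∧ ∀ (c : ℤ) (g : ℤ → ℝ≥0),
      g.support.Finite → ∀ N₁ : ℕ,
        nrm r (fun x => {N ∈ range N₁ | N₀ < N}.sup fun N => ‖posAvg N y c g x‖₊) ≤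
          C * nrm r g := by
  have hr0 : 0 < r := by linarith
  obtain ⟨C, hC⟩ := exists_nrm_sup_blockConv_le hr
  refine ⟨17 * 2 ^ 16 * C + 2 ^ 16 * 72, fun y hy => ⟨y * 2 ^ (16 * y), by positivity,
    fun c g hg N₁ => ?_⟩⟩
  obtain ⟨β, hβ⟩ := exists_shift y c N₁
  have hy0 : (y : ℤ) ≠ 0 := by exact_mod_cast hy.ne'
  set u : ℤ → ℝ≥0 := fun x => (range N₁).sup fun k =>
    ‖blockConv (sieveW y k) β (Ico 1 (4 ^ N₁)) (2 ^ (16 * k))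
      (fun z => g (x % y - c + y * z)) (x / y)‖₊ with hu
  have hunrm : nrm r u ≤ C * nrm r g := by
    rw [← nrm_comp_sub r c g]
    refine nrm_le_of_residues hr0 hy _ _ fun a ha0 hay => ?_
    have hmod : ∀ z : ℤ, (a + y * z) % y = a := fun z => by
      rw [Int.add_mul_emod_self_left, Int.emod_eq_of_lt ha0 hay]
    have hdiv : ∀ z : ℤ, (a + y * z) / y = z := fun z => by
      rw [Int.add_mul_ediv_left _ _ hy0, Int.ediv_eq_zero_of_lt ha0 hay, zero_add]
    simp only [hu, hmod, hdiv]
    have hF : (fun z => g (a + y * z - c)) = fun z : ℤ => g (a - c + y * z) := by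
      funext z; congr 1; ring
    rw [hF]
    refine hC _ (adm_sieveW y) _ _ _ ?_
    have hinj : Function.Injective fun z : ℤ => a - c + y * z := fun z z' h => by
      simpa [hy.ne'] using h
    exact hg.preimage hinj.injOn
  have hpt : ∀ x, ({N ∈ range N₁ | y * 2 ^ (16 * y) < N}.sup fun N => ‖posAvg N y c g x‖₊) ≤
      17 * 2 ^ 16 * u x + ∑ k ∈ range N₁, 2 ^ 16 / 2 ^ (16 * k) * excConv k g x := by
    intro x
    refine Finset.sup_le fun N hN => ?_
    obtain ⟨hN1, hN0⟩ := mem_filter.1 hN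
    rw [mem_range] at hN1
    obtain ⟨k, hk0, hkN, h1, h2⟩ := exists_scale hy hN0
    have hkK : k < N₁ := by lia
    have hyk : y ≤ 2 ^ k := (Nat.lt_two_pow_self.trans (Nat.pow_lt_pow_right (by norm_num) hk0)).le
    have hx : x % y + y * (x / y) = x := Int.emod_add_mul_ediv _ _
    have key := posAvg_le hy hkK (by lia) hyk h1 h2 hβ g (x % y) (x / y)
    rw [hx] at key
    have hub : blockConv (sieveW y k) β (Ico 1 (4 ^ N₁)) (2 ^ (16 * k))
        (fun z => g (x % y - c + y * z)) (x / y) ≤ (u x : ℝ) := by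
      refine (Real.le_norm_self _).trans ?_
      rw [← coe_nnnorm, NNReal.coe_le_coe]
      exact Finset.le_sup (f := fun k => ‖blockConv (sieveW y k) β (Ico 1 (4 ^ N₁)) (2 ^ (16 * k))
        (fun z => g (x % y - c + y * z)) (x / y)‖₊) (mem_range.2 hkK)
    have hex : (2 ^ 16 / 2 ^ (16 * k) * excConv k g x : ℝ≥0) ≤
        ∑ k ∈ range N₁, 2 ^ 16 / 2 ^ (16 * k) * excConv k g x :=
      Finset.single_le_sum (f := fun k => (2 ^ 16 / 2 ^ (16 * k) * excConv k g x : ℝ≥0))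
        (fun _ _ => zero_le) (mem_range.2 hkK)
    rw [← NNReal.coe_le_coe] at hex ⊢
    rw [coe_nnnorm, Real.norm_of_nonneg (posAvg_nonneg _ _ _ _ _)]
    push_cast at hex ⊢
    linarith
  refine (nrm_mono hr0 hpt).trans ((nrm_add_le hr.le _ _).trans ?_)
  rw [nrm_const_mul hr0, ENNReal.coe_add, add_mul]
  refine add_le_add ?_ ?_
  · rw [ENNReal.coe_mul _ C, mul_assoc]
    gcongr
  · refine (nrm_sum_le hr.le _ _).trans ?_
    simp_rw [nrm_const_mul hr0]
    calc ∑ k ∈ range N₁, ((2 ^ 16 / 2 ^ (16 * k) : ℝ≥0) : ℝ≥0∞) * nrm r (excConv k g)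
        ≤ ∑ k ∈ range N₁, ((2 ^ 16 / 2 ^ (16 * k) : ℝ≥0) : ℝ≥0∞) *
            (((36 * 2 ^ (10 * k) : ℝ≥0) : ℝ≥0∞) * nrm r g) := by
          gcongr with k
          exact nrm_excConv_le hr.le k g
      _ = ((∑ k ∈ range N₁, (2 ^ 16 / 2 ^ (16 * k) * (36 * 2 ^ (10 * k)) : ℝ≥0) : ℝ≥0) : ℝ≥0∞) *
            nrm r g := by
          rw [ENNReal.ofNNReal_finsetSum, Finset.sum_mul]
          refine Finset.sum_congr rfl fun k _ => ?_
          rw [ENNReal.coe_mul (2 ^ 16 / 2 ^ (16 * k)), mul_assoc]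
      _ ≤ _ := by
          gcongr
          exact_mod_cast sum_excConv_coeff_le N₁

theorem norm_pavg_le {N y : ℕ} {b : ℤ} {f : ℤ → ℂ} {x : ℤ} {g : ℤ → ℝ≥0}
    (h : ∀ n < N, ‖f (x - n)‖₊ ≤ g (x - n)) : ‖pavg N y b f x‖ ≤ posAvg N y (b % y) g x := by
  rw [pavg, posAvg, norm_mul, norm_div, Complex.norm_natCast, Complex.norm_natCast]
  gcongr
  refine (norm_sum_le _ _).trans (Finset.sum_le_sum fun n hn => ?_)
  rw [norm_mul, Complex.norm_real, Real.norm_of_nonneg ArithmeticFunction.vonMangoldt_nonneg]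
  refine mul_le_mul_of_nonneg_left ?_ ArithmeticFunction.vonMangoldt_nonneg
  exact_mod_cast h n (mem_range.1 (mem_filter.1 hn).1)

theorem sum_sup_pavg_le {r : ℝ} (hr : 0 < r) {y N₀ : ℕ} {b : ℤ} {C : ℝ≥0}
    (h : ∀ g : ℤ → ℝ≥0, g.support.Finite → ∀ N₁ : ℕ,
      nrm r (fun x => {N ∈ range N₁ | N₀ < N}.sup fun N => ‖posAvg N y (b % y) g x‖₊) ≤
        C * nrm r g) (f : ℤ → ℂ) (X : Finset ℤ) (N₁ : ℕ) :
    ∑ x ∈ X, (({N ∈ range N₁ | N₀ < N}.sup fun N => ‖pavg N y b f x‖₊ : ℝ≥0) : ℝ≥0∞) ^ r ≤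
      (C * nrm r fun x => ‖f x‖₊) ^ r := by
  classical
  set F : Finset ℤ := (X ×ˢ range N₁).image fun p => p.1 - p.2 with hF
  set g : ℤ → ℝ≥0 := fun x => if x ∈ F then ‖f x‖₊ else 0 with hg
  have hsupp : g.support.Finite := F.finite_toSet.subset fun x hx => by
    by_contra h
    exact hx (if_neg h)
  have hgf : nrm r g ≤ nrm r fun x => ‖f x‖₊ := nrm_mono hr fun x => by
    simp only [hg]; split_ifs <;> simp
  calc _ ≤ ∑ x ∈ X,
        (({N ∈ range N₁ | N₀ < N}.sup fun N => ‖posAvg N y (b % y) g x‖₊ : ℝ≥0) : ℝ≥0∞) ^ r := by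
        gcongr with x hx N hN
        rw [← NNReal.coe_le_coe, coe_nnnorm, coe_nnnorm,
          Real.norm_of_nonneg (posAvg_nonneg _ _ _ _ _)]
        refine norm_pavg_le fun n hn => ?_
        have hN1 := mem_range.1 (mem_filter.1 hN).1
        have : x - n ∈ F := mem_image.2
          ⟨(x, n), mem_product.2 ⟨hx, mem_range.2 (hn.trans hN1)⟩, rfl⟩
        simp [hg, this]
    _ ≤ _ := ENNReal.sum_le_tsum _
    _ ≤ (C * nrm r g) ^ r := by
        rw [← nrm_rpow hr]
        exact ENNReal.rpow_le_rpow (h g hsupp N₁) hr.le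
    _ ≤ _ := by gcongr

theorem iSup_nnnorm_pavg (N₀ y : ℕ) (b : ℤ) (f : ℤ → ℂ) (x : ℤ) :
    (⨆ (N : ℕ) (_ : N₀ < N), (‖pavg N y b f x‖₊ : ℝ≥0∞)) =
      ⨆ N₁ : ℕ, (({N ∈ range N₁ | N₀ < N}.sup fun N => ‖pavg N y b f x‖₊ : ℝ≥0) : ℝ≥0∞) := by
  refine le_antisymm (iSup₂_le fun N hN => ?_) (iSup_le fun N₁ => ?_)
  · refine le_iSup_of_le (N + 1) (ENNReal.coe_le_coe.2 ?_)
    exact Finset.le_sup (f := fun N => ‖pavg N y b f x‖₊)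
      (mem_filter.2 ⟨mem_range.2 N.lt_succ_self, hN⟩)
  · rw [ENNReal.coe_finset_sup]
    exact Finset.sup_le fun N hN =>
      le_iSup₂_of_le (f := fun N (_ : N₀ < N) => (‖pavg N y b f x‖₊ : ℝ≥0∞))
        N (mem_filter.1 hN).2 le_rfl

theorem tsum_iSup_pavg_le {r : ℝ} (hr : 0 < r) {y N₀ : ℕ} {b : ℤ} {C : ℝ≥0}
    (h : ∀ g : ℤ → ℝ≥0, g.support.Finite → ∀ N₁ : ℕ,
      nrm r (fun x => {N ∈ range N₁ | N₀ < N}.sup fun N => ‖posAvg N y (b % y) g x‖₊) ≤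
        C * nrm r g) (f : ℤ → ℂ) :
    ∑' x : ℤ, (⨆ (N : ℕ) (_ : N₀ < N), (‖pavg N y b f x‖₊ : ℝ≥0∞)) ^ r ≤
      (C * nrm r fun x => ‖f x‖₊) ^ r := by
  rw [ENNReal.tsum_eq_iSup_sum]
  refine iSup_le fun X => ?_
  have hpow : ∀ x, (⨆ (N : ℕ) (_ : N₀ < N), (‖pavg N y b f x‖₊ : ℝ≥0∞)) ^ r =
      ⨆ N₁ : ℕ,
        (({N ∈ range N₁ | N₀ < N}.sup fun N => ‖pavg N y b f x‖₊ : ℝ≥0) : ℝ≥0∞) ^ r := by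
    intro x
    rw [iSup_nnnorm_pavg]
    exact (ENNReal.orderIsoRpow r hr).map_iSup _
  simp_rw [hpow]
  rw [ENNReal.finsetSum_iSup_of_monotone]
  · exact iSup_le fun N₁ => sum_sup_pavg_le hr h f X N₁
  · intro x m n hmn
    refine ENNReal.rpow_le_rpow (ENNReal.coe_le_coe.2 (Finset.sup_mono ?_)) hr.le
    exact filter_subset_filter _ (range_subset_range.2 hmn)

end PrimeAvg

theorem maximal_inequality :
    ∀ r : ℝ, 1 < r →
      ∃ C : ℝ, 0 < C ∧
        ∀ y : ℕ, 1 ≤ y →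
          ∃ N0 : ℕ, 0 < N0 ∧
            ∀ b : ℤ, Int.gcd b y = 1 →
              ∀ f : ℤ → ℂ,
                (∑' x : ℤ,
                    (⨆ (N : ℕ) (_ : N0 < N), (‖pavg N y b f x‖₊ : ℝ≥0∞)) ^ r) ^ (1 / r) ≤
                  ENNReal.ofReal C * (∑' x : ℤ, (‖f x‖₊ : ℝ≥0∞) ^ r) ^ (1 / r) := by
  intro r hr
  have hr0 : 0 < r := by linarith
  obtain ⟨C, hC⟩ := PrimeAvg.exists_nrm_sup_posAvg_le hr
  refine ⟨C + 1, by positivity, fun y hy => ?_⟩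
  obtain ⟨N₀, hN₀, h⟩ := hC y hy
  refine ⟨N₀, hN₀, fun b _ f => ?_⟩
  have hle := PrimeAvg.tsum_iSup_pavg_le hr0 (fun g hg => h (b % y) g hg) f
  refine (ENNReal.rpow_le_rpow hle (by positivity)).trans ?_
  rw [← ENNReal.rpow_mul, mul_one_div_cancel hr0.ne', ENNReal.rpow_one]
  refine mul_le_mul_left ?_ _
  rw [← ENNReal.ofReal_coe_nnreal]
  exact ENNReal.ofReal_le_ofReal (by linarith)

end
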